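/- Let a : (0,∞) → [0,∞) be smooth and bounded with bounded first derivative, and let g : ℝ⁹ → ℝ, written g(u,v,w) with u,v,w ∈ ℝ³, be smooth, strictly positive with Gaussian-type bounds. Write Π = Π(u−v), η = ∇_u g − ∇_v g ∈ ℝ³, ξ = (∇_w g)/g ∈ ℝ³, and let M be the 3×3 matrix M_{αγ} = (∂_{u_α} − ∂_{v_α})∂_{w_γ} g. Then ∫_{ℝ⁹} (∇_w g/g)·∇_w( div_{u−v}[ a(|u−v|) Π (∇_u g − ∇_v g) ] ) du dv dw − (1/2)∫_{ℝ⁹} (|∇_w g|²/g²)· div_{u−v}[ a(|u−v|) Π (∇_u g − ∇_v g) ] du dv dw = −∫_{ℝ⁹} (a(|u−v|)/g)·‖ΠM − (Πη)⊗ξ‖_F² du dv dw ≤ 0. (The third-variable term Term_{k≠i≠j} in the proof of Fisher decay along the Landau–Kac flow.) -/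

import Mathlib

open MeasureTheory Real

noncomputable section

abbrev V3 := Fin 3 → ℝ
/-- ℝ⁹ written as triples (u, v, w) of points of ℝ³. -/
abbrev E9 := V3 × V3 × V3

/-- Squared Euclidean norm on ℝ³. -/
def sq3 (z : V3) : ℝ := ∑ α, (z α) ^ 2
/-- Euclidean norm on ℝ³. -/
def nrm3 (z : V3) : ℝ := Real.sqrt (sq3 z)
/-- Projection matrix `Π(z) = Id − z⊗z/|z|²`, entrywise. -/
def proj (z : V3) (α β : Fin 3) : ℝ := (if α = β then (1:ℝ) else 0) - z α * z β / sq3 z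

/-- Partial derivative in the `α`-th coordinate of `u`. -/
def pdu (g : E9 → ℝ) (z : E9) (α : Fin 3) : ℝ := fderiv ℝ g z (Pi.single α 1, 0, 0)
/-- Partial derivative in the `α`-th coordinate of `v`. -/
def pdvv (g : E9 → ℝ) (z : E9) (α : Fin 3) : ℝ := fderiv ℝ g z (0, Pi.single α 1, 0)
/-- Partial derivative in the `α`-th coordinate of `w`. -/
def pdw (g : E9 → ℝ) (z : E9) (α : Fin 3) : ℝ := fderiv ℝ g z (0, 0, Pi.single α 1)

/-- The flux `a(|u−v|) Π(u−v) (∇_u g − ∇_v g)`, `α`-component. -/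
def flux9 (a : ℝ → ℝ) (g : E9 → ℝ) (α : Fin 3) : E9 → ℝ := fun z =>
  a (nrm3 (z.1 - z.2.1)) * ∑ β, proj (z.1 - z.2.1) α β * (pdu g z β - pdvv g z β)

/-- `D = div_{u−v}[a(|u−v|) Π(u−v) (∇_u g − ∇_v g)]`. -/
def Dop9 (a : ℝ → ℝ) (g : E9 → ℝ) : E9 → ℝ := fun z =>
  ∑ α, (pdu (flux9 a g α) z α - pdvv (flux9 a g α) z α)

/-!
Write `L φ = div (a Π ∇φ)` for the degenerate elliptic operator `D`, the divergence and the gradient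
being those of `u - v`, and `Γ(φ, χ) = ∇φ · a Π ∇χ` for its carré du champ. The coefficients of `L`
do not depend on `w`, so `L` commutes with `∂_{w_γ}`, and with `ψ = ∂_{w_γ} log g` the first
integrand is a sum over `γ` of terms `ψ L(ψ g)`. The product rule gives
`L(ψ² g) = 2 ψ L(ψ g) - ψ² L g + 2 g Γ(ψ, ψ)`; the left-hand side integrates to zero, which leaves
`-∫ g Γ(ψ, ψ)`. Since `g ∇ψ = ∇∂_{w_γ} g - ψ ∇g` and `Π` is an orthogonal projection, `g Γ(ψ, ψ)` is
`a / g` times the squared norm of the `γ`-th column of `ΠM - (Πη) ⊗ ξ`.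

The coefficients are singular on the collision set `u = v`, but boundary terms are not an issue:
`L φ` is integrated against cutoffs depending only on `|u - v|` and `|u|² + |v|² + |w|²`, whose
gradients are parallel to `u - v` and hence annihilated by `Π`. Only integrability of `L φ` is
needed, and `div (a Π) = O(1 / |u - v|)` without any derivative of `a`, for the same reason.
-/

open Asymptotics Filter Topology
open scoped ContDiff

section DirectionalDerivative

variable {E F : Type*} [NormedAddCommGroup E] [NormedSpace ℝ E]
  [NormedAddCommGroup F] [NormedSpace ℝ F] {f h : E → ℝ} {z : E}

/-- The directional derivative `∂_x f`, as an operator on functions. -/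
def dirDeriv (x : E) (f : E → ℝ) (z : E) : ℝ := fderiv ℝ f z x

lemma contDiffAt_dirDeriv {m n : ℕ∞ω} (hf : ContDiffAt ℝ n f z) (hmn : m + 1 ≤ n) (x : E) :
    ContDiffAt ℝ m (dirDeriv x f) z :=
  (hf.fderiv_right hmn).clm_apply contDiffAt_const

lemma contDiff_dirDeriv {m n : ℕ∞ω} (hf : ContDiff ℝ n f) (hmn : m + 1 ≤ n) (x : E) :
    ContDiff ℝ m (dirDeriv x f) :=
  contDiff_iff_contDiffAt.2 fun _ => contDiffAt_dirDeriv hf.contDiffAt hmn x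

lemma differentiableAt_dirDeriv (hf : ContDiffAt ℝ 2 f z) (x : E) :
    DifferentiableAt ℝ (dirDeriv x f) z :=
  (contDiffAt_dirDeriv (m := 1) hf one_add_one_eq_two.le x).differentiableAt one_ne_zero

lemma dirDeriv_dirDeriv (hf : ContDiffAt ℝ 2 f z) (x y : E) :
    dirDeriv x (dirDeriv y f) z = fderiv ℝ (fderiv ℝ f) z x y := by
  have hf' : DifferentiableAt ℝ (fderiv ℝ f) z :=
    (hf.fderiv_right (m := 1) one_add_one_eq_two.le).differentiableAt one_ne_zero
  unfold dirDeriv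
  rw [fderiv_clm_apply hf' (differentiableAt_const y)]
  simp

lemma dirDeriv_comm (hf : ContDiffAt ℝ 2 f z) (x y : E) :
    dirDeriv x (dirDeriv y f) z = dirDeriv y (dirDeriv x f) z := by
  rw [dirDeriv_dirDeriv hf, dirDeriv_dirDeriv hf]
  exact hf.isSymmSndFDerivAt (by simp) x y

lemma dirDeriv_congr (hfh : f =ᶠ[𝓝 z] h) (x : E) : dirDeriv x f z = dirDeriv x h z := by
  simp only [dirDeriv, hfh.fderiv_eq]

lemma dirDeriv_smul (c : ℝ) (x : E) : dirDeriv (c • x) f z = c * dirDeriv x f z := by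
  simp [dirDeriv]

lemma dirDeriv_add (hf : DifferentiableAt ℝ f z) (hh : DifferentiableAt ℝ h z) (x : E) :
    dirDeriv x (fun y => f y + h y) z = dirDeriv x f z + dirDeriv x h z := by
  simp [dirDeriv, fderiv_fun_add hf hh]

lemma dirDeriv_mul (hf : DifferentiableAt ℝ f z) (hh : DifferentiableAt ℝ h z) (x : E) :
    dirDeriv x (fun y => f y * h y) z = dirDeriv x f z * h z + f z * dirDeriv x h z := by
  simp [dirDeriv, fderiv_fun_mul hf hh]
  ring

lemma dirDeriv_sum {ι : Type*} {s : Finset ι} {f : ι → E → ℝ}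
    (hf : ∀ i ∈ s, DifferentiableAt ℝ (f i) z) (x : E) :
    dirDeriv x (fun y => ∑ i ∈ s, f i y) z = ∑ i ∈ s, dirDeriv x (f i) z := by
  simp [dirDeriv, fderiv_fun_sum hf]

lemma dirDeriv_comp {b : ℝ → ℝ} (hb : DifferentiableAt ℝ b (f z)) (hf : DifferentiableAt ℝ f z)
    (x : E) : dirDeriv x (fun y => b (f y)) z = deriv b (f z) * dirDeriv x f z := by
  have h : fderiv ℝ (fun y => b (f y)) z = deriv b (f z) • fderiv ℝ f z :=
    (hb.hasDerivAt.comp_hasFDerivAt z hf.hasFDerivAt).fderiv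
  simp [dirDeriv, h]

lemma dirDeriv_exp (hf : DifferentiableAt ℝ f z) (x : E) :
    dirDeriv x (fun y => exp (f y)) z = exp (f z) * dirDeriv x f z := by
  rw [dirDeriv_comp differentiableAt_exp hf, Real.deriv_exp]

lemma dirDeriv_log (hf : DifferentiableAt ℝ f z) (hz : f z ≠ 0) (x : E) :
    dirDeriv x (fun y => log (f y)) z = dirDeriv x f z / f z := by
  rw [dirDeriv_comp (differentiableAt_log hz) hf, deriv_log, inv_mul_eq_div]

lemma dirDeriv_comp_clm {K : F → ℝ} (A : E →L[ℝ] F) (hK : DifferentiableAt ℝ K (A z)) (x : E) :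
    dirDeriv x (fun y => K (A y)) z = dirDeriv (A x) K (A z) := by
  have h : fderiv ℝ (fun y => K (A y)) z = (fderiv ℝ K (A z)).comp A :=
    (hK.hasFDerivAt.comp z A.hasFDerivAt).fderiv
  simp [dirDeriv, h]

lemma norm_iteratedFDeriv_dirDeriv_le {k : ℕ} (hf : ContDiffAt ℝ (k + 1) f z) (x : E) :
    ‖iteratedFDeriv ℝ k (dirDeriv x f) z‖ ≤ ‖x‖ * ‖iteratedFDeriv ℝ (k + 1) f z‖ := by
  let ev := ContinuousLinearMap.apply ℝ ℝ x
  have hev : ‖ev‖ ≤ ‖x‖ := ev.opNorm_le_bound (norm_nonneg x) fun L =>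
    (L.le_opNorm x).trans_eq (mul_comm _ _)
  calc ‖iteratedFDeriv ℝ k (dirDeriv x f) z‖
      ≤ ‖ev‖ * ‖iteratedFDeriv ℝ k (fderiv ℝ f) z‖ :=
        ev.norm_iteratedFDeriv_comp_left (hf.fderiv_right le_rfl) le_rfl
    _ ≤ ‖x‖ * ‖iteratedFDeriv ℝ (k + 1) f z‖ := by
        rw [norm_iteratedFDeriv_fderiv]
        gcongr

end DirectionalDerivative

section DivergenceForm

variable {E ι : Type*} [NormedAddCommGroup E] [NormedSpace ℝ E] [Fintype ι]

/-- The flux `k ∇f` of a function `f` for the coefficient matrix `k`, the gradient being taken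
along the family of directions `e`. -/
def diffusionFlux (e : ι → E) (k : ι → ι → E → ℝ) (f : E → ℝ) (α : ι) (z : E) : ℝ :=
  ∑ β, k α β z * dirDeriv (e β) f z

/-- The second order operator in divergence form `L f = div (k ∇f)`, the divergence and the
gradient being taken along the family of directions `e`. -/
def diffusionOp (e : ι → E) (k : ι → ι → E → ℝ) (f : E → ℝ) (z : E) : ℝ :=
  ∑ α, dirDeriv (e α) (diffusionFlux e k f α) z

/-- The carré du champ `Γ(f, h) = ∇f · k ∇h` of the operator `diffusionOp e k`. -/
def carreDuChamp (e : ι → E) (k : ι → ι → E → ℝ) (f h : E → ℝ) (z : E) : ℝ :=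
  ∑ α, dirDeriv (e α) f z * diffusionFlux e k h α z

variable {e : ι → E} {k : ι → ι → E → ℝ} {f h : E → ℝ} {z : E}

lemma contDiffAt_diffusionFlux {m n : ℕ∞ω} (hk : ∀ α β, ContDiffAt ℝ m (k α β) z)
    (hf : ContDiffAt ℝ n f z) (hmn : m + 1 ≤ n) (α : ι) :
    ContDiffAt ℝ m (diffusionFlux e k f α) z :=
  ContDiffAt.sum fun β _ => (hk α β).mul (contDiffAt_dirDeriv hf hmn _)

lemma differentiableAt_diffusionFlux (hk : ∀ α β, ContDiffAt ℝ 1 (k α β) z)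
    (hf : ContDiffAt ℝ 2 f z) (α : ι) : DifferentiableAt ℝ (diffusionFlux e k f α) z :=
  (contDiffAt_diffusionFlux hk hf one_add_one_eq_two.le α).differentiableAt one_ne_zero

lemma diffusionFlux_mul (hf : DifferentiableAt ℝ f z) (hh : DifferentiableAt ℝ h z) (α : ι) :
    diffusionFlux e k (fun y => f y * h y) α z
      = f z * diffusionFlux e k h α z + h z * diffusionFlux e k f α z := by
  simp only [diffusionFlux, dirDeriv_mul hf hh, Finset.mul_sum, ← Finset.sum_add_distrib]
  exact Finset.sum_congr rfl fun β _ => by ring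

lemma diffusionFlux_exp (hf : DifferentiableAt ℝ f z) (α : ι) :
    diffusionFlux e k (fun y => exp (f y)) α z = exp (f z) * diffusionFlux e k f α z := by
  simp only [diffusionFlux, dirDeriv_exp hf, Finset.mul_sum]
  exact Finset.sum_congr rfl fun β _ => by ring

lemma carreDuChamp_exp_left (hf : DifferentiableAt ℝ f z) :
    carreDuChamp e k (fun y => exp (f y)) h z = exp (f z) * carreDuChamp e k f h z := by
  simp only [carreDuChamp, dirDeriv_exp hf, Finset.mul_sum, mul_assoc]

lemma carreDuChamp_comm (hsymm : ∀ α β, k α β z = k β α z) :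
    carreDuChamp e k f h z = carreDuChamp e k h f z := by
  simp only [carreDuChamp, diffusionFlux, Finset.mul_sum]
  rw [Finset.sum_comm]
  refine Finset.sum_congr rfl fun β _ => Finset.sum_congr rfl fun α _ => ?_
  rw [hsymm α β]
  ring

lemma carreDuChamp_mul_right {f₁ f₂ : E → ℝ} (hf₁ : DifferentiableAt ℝ f₁ z)
    (hf₂ : DifferentiableAt ℝ f₂ z) :
    carreDuChamp e k h (fun y => f₁ y * f₂ y) z
      = f₁ z * carreDuChamp e k h f₂ z + f₂ z * carreDuChamp e k h f₁ z := by
  simp only [carreDuChamp, diffusionFlux_mul hf₁ hf₂, Finset.mul_sum, ← Finset.sum_add_distrib]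
  exact Finset.sum_congr rfl fun α _ => by ring

lemma sum_dirDeriv_mul_diffusionFlux (hk : ∀ α β, ContDiffAt ℝ 1 (k α β) z)
    (hf : DifferentiableAt ℝ f z) (hh : ContDiffAt ℝ 2 h z) :
    ∑ α, dirDeriv (e α) (fun y => f y * diffusionFlux e k h α y) z
      = f z * diffusionOp e k h z + carreDuChamp e k f h z := by
  simp only [dirDeriv_mul hf (differentiableAt_diffusionFlux hk hh _), Finset.sum_add_distrib,
    ← Finset.mul_sum]
  exact add_comm _ _

lemma diffusionOp_mul (hk : ∀ α β, ContDiffAt ℝ 1 (k α β) z)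
    (hsymm : ∀ α β, k α β z = k β α z) (hf : ContDiffAt ℝ 2 f z) (hh : ContDiffAt ℝ 2 h z) :
    diffusionOp e k (fun y => f y * h y) z
      = f z * diffusionOp e k h z + h z * diffusionOp e k f z + 2 * carreDuChamp e k f h z := by
  have hf' := hf.differentiableAt two_ne_zero
  have hh' := hh.differentiableAt two_ne_zero
  have hflux : ∀ α, diffusionFlux e k (fun y => f y * h y) α =ᶠ[𝓝 z]
      fun y => f y * diffusionFlux e k h α y + h y * diffusionFlux e k f α y := by
    intro α
    filter_upwards [hf.eventually (by simp), hh.eventually (by simp)] with y hfy hhy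
    exact diffusionFlux_mul (hfy.differentiableAt two_ne_zero) (hhy.differentiableAt two_ne_zero) α
  calc diffusionOp e k (fun y => f y * h y) z
      = ∑ α, dirDeriv (e α) (fun y => f y * diffusionFlux e k h α y) z
        + ∑ α, dirDeriv (e α) (fun y => h y * diffusionFlux e k f α y) z := by
        rw [diffusionOp, ← Finset.sum_add_distrib]
        refine Finset.sum_congr rfl fun α _ => ?_
        rw [dirDeriv_congr (hflux α), dirDeriv_add
          (hf'.fun_mul (differentiableAt_diffusionFlux hk hh α))
          (hh'.fun_mul (differentiableAt_diffusionFlux hk hf α))]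
    _ = _ := by
        rw [sum_dirDeriv_mul_diffusionFlux hk hf' hh, sum_dirDeriv_mul_diffusionFlux hk hh' hf,
          carreDuChamp_comm (f := h) hsymm]
        ring

lemma diffusionOp_exp (hk : ∀ α β, ContDiffAt ℝ 1 (k α β) z) (hf : ContDiffAt ℝ 2 f z) :
    diffusionOp e k (fun y => exp (f y)) z
      = exp (f z) * (diffusionOp e k f z + carreDuChamp e k f f z) := by
  have hf' := hf.differentiableAt two_ne_zero
  have hflux : ∀ α, diffusionFlux e k (fun y => exp (f y)) α =ᶠ[𝓝 z]
      fun y => exp (f y) * diffusionFlux e k f α y := by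
    intro α
    filter_upwards [hf.eventually (by simp)] with y hy
    exact diffusionFlux_exp (hy.differentiableAt two_ne_zero) α
  calc diffusionOp e k (fun y => exp (f y)) z
      = ∑ α, dirDeriv (e α) (fun y => exp (f y) * diffusionFlux e k f α y) z :=
        Finset.sum_congr rfl fun α _ => dirDeriv_congr (hflux α) _
    _ = _ := by
        rw [sum_dirDeriv_mul_diffusionFlux hk hf'.exp hf, carreDuChamp_exp_left hf', mul_add]

/-- With `p = ψ g`, expanding both `L (ψ p)` and `L (ψ g)` by the product rule eliminates `L ψ`. -/
lemma diffusionOp_sq_mul {ψ g : E → ℝ} (hk : ∀ α β, ContDiffAt ℝ 1 (k α β) z)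
    (hsymm : ∀ α β, k α β z = k β α z) (hψ : ContDiffAt ℝ 2 ψ z) (hg : ContDiffAt ℝ 2 g z) :
    diffusionOp e k (fun y => ψ y * (ψ y * g y)) z
      = 2 * (ψ z * diffusionOp e k (fun y => ψ y * g y) z) - ψ z ^ 2 * diffusionOp e k g z
        + 2 * (g z * carreDuChamp e k ψ ψ z) := by
  rw [diffusionOp_mul hk hsymm hψ (hψ.mul hg),
    carreDuChamp_mul_right (hψ.differentiableAt two_ne_zero) (hg.differentiableAt two_ne_zero),
    diffusionOp_mul hk hsymm hψ hg]
  ring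

lemma diffusionOp_eq_sum_add_sum (hk : ∀ α β, DifferentiableAt ℝ (k α β) z)
    (hf : ContDiffAt ℝ 2 f z) :
    diffusionOp e k f z = (∑ β, (∑ α, dirDeriv (e α) (k α β) z) * dirDeriv (e β) f z)
      + ∑ α, ∑ β, k α β z * dirDeriv (e α) (dirDeriv (e β) f) z := by
  have hflux : ∀ α, dirDeriv (e α) (diffusionFlux e k f α) z
      = ∑ β, dirDeriv (e α) (k α β) z * dirDeriv (e β) f z
        + ∑ β, k α β z * dirDeriv (e α) (dirDeriv (e β) f) z := by
    intro α
    unfold diffusionFlux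
    rw [dirDeriv_sum fun β _ => (hk α β).fun_mul (differentiableAt_dirDeriv hf _),
      ← Finset.sum_add_distrib]
    exact Finset.sum_congr rfl fun β _ =>
      dirDeriv_mul (hk α β) (differentiableAt_dirDeriv hf _) _
  simp only [diffusionOp, hflux, Finset.sum_add_distrib, Finset.sum_mul]
  rw [Finset.sum_comm]

lemma dirDeriv_diffusionFlux {x : E} (hk : ∀ α β, DifferentiableAt ℝ (k α β) z)
    (hx : ∀ α β, dirDeriv x (k α β) z = 0) (hf : ContDiffAt ℝ 2 f z) (α : ι) :
    dirDeriv x (diffusionFlux e k f α) z = diffusionFlux e k (dirDeriv x f) α z := by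
  unfold diffusionFlux
  rw [dirDeriv_sum fun β _ => (hk α β).fun_mul (differentiableAt_dirDeriv hf _)]
  refine Finset.sum_congr rfl fun β _ => ?_
  rw [dirDeriv_mul (hk α β) (differentiableAt_dirDeriv hf _), hx, dirDeriv_comm hf x]
  ring

lemma dirDeriv_diffusionOp {x : E} (hk : ∀ α β, ContDiffAt ℝ 2 (k α β) z)
    (hx : ∀ α β, dirDeriv x (k α β) =ᶠ[𝓝 z] 0) (hf : ContDiffAt ℝ 3 f z) :
    dirDeriv x (diffusionOp e k f) z = diffusionOp e k (dirDeriv x f) z := by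
  have hflux : ∀ α, ContDiffAt ℝ 2 (diffusionFlux e k f α) z :=
    contDiffAt_diffusionFlux hk hf (by norm_num)
  have hcomm : ∀ α, dirDeriv x (diffusionFlux e k f α) =ᶠ[𝓝 z]
      diffusionFlux e k (dirDeriv x f) α := by
    intro α
    filter_upwards [eventually_all.2 fun α => eventually_all.2 fun β =>
        (hk α β).eventually (by simp), eventually_all.2 fun α => eventually_all.2 fun β => hx α β,
      hf.eventually (by simp)] with y hky hxy hfy
    exact dirDeriv_diffusionFlux (fun α β => (hky α β).differentiableAt two_ne_zero) hxy
      (hfy.of_le (by norm_num)) α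
  unfold diffusionOp
  rw [dirDeriv_sum fun α _ => differentiableAt_dirDeriv (hflux α) _]
  exact Finset.sum_congr rfl fun α _ => by
    rw [dirDeriv_comm (hflux α) x, dirDeriv_congr (hcomm α)]

end DivergenceForm

section IntegralDivergence

variable {E ι : Type*} [NormedAddCommGroup E] [NormedSpace ℝ E] [MeasurableSpace E] [BorelSpace E]
  [Fintype ι] {μ : Measure E}

lemma measurable_dirDeriv (x : E) (f : E → ℝ) : Measurable (dirDeriv x f) :=
  measurable_fderiv_apply_const ℝ f x

lemma measurable_diffusionOp (e : ι → E) (k : ι → ι → E → ℝ) (f : E → ℝ) :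
    Measurable (diffusionOp e k f) :=
  Finset.measurable_fun_sum _ fun _ _ => measurable_dirDeriv _ _

lemma aestronglyMeasurable_carreDuChamp {k : ι → ι → E → ℝ}
    (hk : ∀ α β, AEStronglyMeasurable (k α β) μ) (e : ι → E) (f h : E → ℝ) :
    AEStronglyMeasurable (carreDuChamp e k f h) μ :=
  Finset.aestronglyMeasurable_fun_sum _ fun α _ =>
    (measurable_dirDeriv _ _).aestronglyMeasurable.mul <|
      Finset.aestronglyMeasurable_fun_sum _ fun β _ =>
        (hk α β).mul (measurable_dirDeriv _ _).aestronglyMeasurable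

lemma integrable_dirDeriv_of_hasCompactSupport [IsFiniteMeasureOnCompacts μ] {f : E → ℝ}
    (hf : ContDiff ℝ 1 f) (hc : HasCompactSupport f) (x : E) : Integrable (dirDeriv x f) μ :=
  ((hf.continuous_fderiv one_ne_zero).clm_apply
    continuous_const).integrable_of_hasCompactSupport (hc.fderiv_apply ℝ x)

variable [FiniteDimensional ℝ E] [μ.IsAddHaarMeasure]

lemma integral_dirDeriv_eq_zero {f : E → ℝ} (hf : ContDiff ℝ 1 f) (hc : HasCompactSupport f)
    (x : E) : ∫ z, dirDeriv x f z ∂μ = 0 := by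
  have h := integral_mul_fderiv_eq_neg_fderiv_mul_of_integrable (μ := μ)
    (f := fun _ => (1 : ℝ)) (g := f) (v := x) (by simp)
    (by simpa [dirDeriv] using! integrable_dirDeriv_of_hasCompactSupport (μ := μ) hf hc x)
    (by simpa using hf.continuous.integrable_of_hasCompactSupport hc)
    (fun _ _ => differentiableAt_const _) (fun z _ => hf.contDiffAt.differentiableAt one_ne_zero)
  simpa [dirDeriv] using h

/-- The cutoffs `χ n` remove the singularities of the field `F`; their gradients are orthogonal to
`F`, so that no commutator term has to be estimated. -/
lemma integral_divergence_eq_zero {e : ι → E} {F : ι → E → ℝ} {χ : ℕ → E → ℝ}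
    (hχF : ∀ n α, ContDiff ℝ 1 fun z => χ n z * F α z) (hc : ∀ n, HasCompactSupport (χ n))
    (hdiv : ∀ n, ∀ᵐ z ∂μ, ∑ α, dirDeriv (e α) (fun y => χ n y * F α y) z
      = χ n z * ∑ α, dirDeriv (e α) (F α) z)
    (hle : ∀ n z, |χ n z| ≤ 1) (hlim : ∀ᵐ z ∂μ, Tendsto (fun n => χ n z) atTop (𝓝 1))
    (hint : Integrable (fun z => ∑ α, dirDeriv (e α) (F α) z) μ) :
    ∫ z, ∑ α, dirDeriv (e α) (F α) z ∂μ = 0 := by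
  have hzero : ∀ n, ∫ z, ∑ α, dirDeriv (e α) (fun y => χ n y * F α y) z ∂μ = 0 := by
    intro n
    rw [integral_finsetSum _ fun α _ =>
      integrable_dirDeriv_of_hasCompactSupport (hχF n α) (hc n).mul_right _]
    exact Finset.sum_eq_zero fun α _ => integral_dirDeriv_eq_zero (hχF n α) (hc n).mul_right _
  have htendsto : Tendsto (fun n => ∫ z, ∑ α, dirDeriv (e α) (fun y => χ n y * F α y) z ∂μ) atTop
      (𝓝 (∫ z, ∑ α, dirDeriv (e α) (F α) z ∂μ)) := by
    refine tendsto_integral_of_dominated_convergence _ (fun n =>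
      (Finset.measurable_fun_sum _ fun _ _ => measurable_dirDeriv _ _).aestronglyMeasurable)
      hint.norm (fun n => ?_) ?_
    · filter_upwards [hdiv n] with z hz
      rw [hz, norm_mul]
      exact mul_le_of_le_one_left (norm_nonneg _) (hle n z)
    · filter_upwards [ae_all_iff.2 hdiv, hlim] with z hz hlz
      simpa only [hz, one_mul] using hlz.mul_const (∑ α, dirDeriv (e α) (F α) z)
  exact tendsto_nhds_unique htendsto (by simp [hzero])

end IntegralDivergence

section PolynomialGrowth

variable {E : Type*} [NormedAddCommGroup E] {l : Filter E} {ρ ρ₁ ρ₂ f f₁ f₂ : E → ℝ}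

/-- Along the filter `l`, the function `f` is dominated by the weight `ρ` times a polynomial in
`‖z‖`. -/
def PolyBoundedBy (l : Filter E) (ρ f : E → ℝ) : Prop :=
  ∃ n : ℕ, f =O[l] fun z => (1 + ‖z‖) ^ n * ρ z

namespace PolyBoundedBy

lemma refl (l : Filter E) (f : E → ℝ) : PolyBoundedBy l f f := ⟨0, by simpa using isBigO_refl f l⟩

lemma mono_weight (hf : PolyBoundedBy l ρ₁ f) (hρ : ρ₁ =O[l] ρ₂) : PolyBoundedBy l ρ₂ f := by
  obtain ⟨n, hn⟩ := hf
  exact ⟨n, hn.trans ((isBigO_refl _ l).mul hρ)⟩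

lemma congr (hf : PolyBoundedBy l ρ f₁) (h : f₁ =ᶠ[l] f₂) : PolyBoundedBy l ρ f₂ := by
  obtain ⟨n, hn⟩ := hf
  exact ⟨n, hn.congr' h EventuallyEq.rfl⟩

lemma add (h₁ : PolyBoundedBy l ρ f₁) (h₂ : PolyBoundedBy l ρ f₂) :
    PolyBoundedBy l ρ fun z => f₁ z + f₂ z := by
  obtain ⟨m, hm⟩ := h₁
  obtain ⟨n, hn⟩ := h₂
  have hmono : ∀ {p : ℕ}, p ≤ m + n →
      (fun z : E => (1 + ‖z‖) ^ p * ρ z) =O[l] fun z => (1 + ‖z‖) ^ (m + n) * ρ z := by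
    intro p hp
    refine IsBigO.mul (IsBigO.of_norm_le fun z => ?_) (isBigO_refl _ l)
    rw [norm_of_nonneg (by positivity)]
    exact pow_le_pow_right₀ (le_add_of_nonneg_right (norm_nonneg z)) hp
  exact ⟨m + n, (hm.trans (hmono (Nat.le_add_right m n))).add
    (hn.trans (hmono (Nat.le_add_left n m)))⟩

lemma const_mul (hf : PolyBoundedBy l ρ f) (c : ℝ) : PolyBoundedBy l ρ fun z => c * f z := by
  obtain ⟨n, hn⟩ := hf
  exact ⟨n, hn.const_mul_left c⟩

lemma sum {ι : Type*} {s : Finset ι} {f : ι → E → ℝ} (hf : ∀ i ∈ s, PolyBoundedBy l ρ (f i)) :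
    PolyBoundedBy l ρ fun z => ∑ i ∈ s, f i z := by
  classical
  induction s using Finset.induction_on with
  | empty => exact ⟨0, by simpa using isBigO_zero _ l⟩
  | insert i s hi ih =>
    simp only [Finset.sum_insert hi]
    exact (hf i (Finset.mem_insert_self i s)).add
      (ih fun j hj => hf j (Finset.mem_insert_of_mem hj))

lemma mul (h₁ : PolyBoundedBy l ρ₁ f₁) (h₂ : PolyBoundedBy l ρ₂ f₂) :
    PolyBoundedBy l (fun z => ρ₁ z * ρ₂ z) fun z => f₁ z * f₂ z := by
  obtain ⟨m, hm⟩ := h₁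
  obtain ⟨n, hn⟩ := h₂
  exact ⟨m + n, (hm.mul hn).congr_right fun z => by ring⟩

lemma weight_mul (h₁ : PolyBoundedBy l 1 f₁) (h₂ : PolyBoundedBy l ρ f₂) :
    PolyBoundedBy l ρ fun z => f₁ z * f₂ z := by
  simpa using h₁.mul h₂

lemma integrable [MeasurableSpace E] {μ : Measure E} (hf : PolyBoundedBy (ae μ) ρ f)
    (hfm : AEStronglyMeasurable f μ) (hρ : ∀ n : ℕ, Integrable (fun z => (1 + ‖z‖) ^ n * ρ z) μ) :
    Integrable f μ := by
  obtain ⟨n, hn⟩ := hf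
  obtain ⟨C, hC⟩ := hn.bound
  exact ((hρ n).norm.const_mul C).mono' hfm hC

end PolyBoundedBy

variable [NormedSpace ℝ E]

/-- The function `f` is of class `C^j` and its derivatives of orders `i, …, j` have polynomial
growth. -/
structure PolyGrowthDerivs (i j : ℕ) (f : E → ℝ) : Prop where
  contDiff : ContDiff ℝ j f
  bound : ∀ k, i ≤ k → k ≤ j →
    ∃ C : ℝ, ∃ n : ℕ, ∀ z, ‖iteratedFDeriv ℝ k f z‖ ≤ C * (1 + ‖z‖) ^ n

namespace PolyGrowthDerivs

variable {i j : ℕ}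

lemma mono {i' j' : ℕ} (hf : PolyGrowthDerivs i j f) (hi : i ≤ i') (hj : j' ≤ j) :
    PolyGrowthDerivs i' j' f :=
  ⟨hf.contDiff.of_le (by exact_mod_cast hj), fun k hik hkj => hf.bound k (hi.trans hik)
    (hkj.trans hj)⟩

protected lemma dirDeriv (hf : PolyGrowthDerivs (i + 1) (j + 1) f) (x : E) :
    PolyGrowthDerivs i j (dirDeriv x f) := by
  refine ⟨contDiff_dirDeriv hf.contDiff (by simp) x, fun k hik hkj => ?_⟩
  obtain ⟨C, n, hC⟩ := hf.bound (k + 1) (by lia) (by lia)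
  have hk : ContDiff ℝ (k + 1) f := hf.contDiff.of_le (by exact_mod_cast Nat.succ_le_succ hkj)
  refine ⟨‖x‖ * C, n, fun z => (norm_iteratedFDeriv_dirDeriv_le hk.contDiffAt x).trans ?_⟩
  rw [mul_assoc]
  exact mul_le_mul_of_nonneg_left (hC z) (norm_nonneg x)

lemma polyBoundedBy (hf : PolyGrowthDerivs 0 j f) : PolyBoundedBy l 1 f := by
  obtain ⟨C, n, hC⟩ := hf.bound 0 le_rfl (Nat.zero_le j)
  refine ⟨n, IsBigO.of_bound C (Eventually.of_forall fun z => ?_)⟩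
  rw [Pi.one_apply, mul_one, norm_of_nonneg (by positivity : 0 ≤ (1 + ‖z‖) ^ n)]
  exact norm_iteratedFDeriv_zero (𝕜 := ℝ) (f := f) ▸ hC z

end PolyGrowthDerivs

end PolynomialGrowth

section TameKernel

variable {E ι : Type*} [NormedAddCommGroup E] [NormedSpace ℝ E] [MeasurableSpace E] [Fintype ι]

/-- A symmetric coefficient matrix `k` of polynomial growth, continuously differentiable almost
everywhere, whose divergence is dominated by a polynomial times the weight `σ ≥ 1`. The weight
accounts for the singularities of `k`. -/
structure IsTameKernel (μ : Measure E) (e : ι → E) (σ : E → ℝ) (k : ι → ι → E → ℝ) : Prop where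
  one_le_weight : ∀ z, 1 ≤ σ z
  symm : ∀ α β z, k α β z = k β α z
  contDiffAt : ∀ᵐ z ∂μ, ∀ α β, ContDiffAt ℝ 1 (k α β) z
  aestronglyMeasurable : ∀ α β, AEStronglyMeasurable (k α β) μ
  polyBoundedBy : ∀ α β, PolyBoundedBy (ae μ) 1 (k α β)
  drift_polyBoundedBy :
    ∀ β, PolyBoundedBy (ae μ) σ fun z => ∑ α, dirDeriv (e α) (k α β) z

namespace IsTameKernel

variable {μ : Measure E} {e : ι → E} {σ : E → ℝ} {k : ι → ι → E → ℝ} {f h ψ : E → ℝ}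

lemma polyBoundedBy_carreDuChamp (hk : IsTameKernel μ e σ k) (hf : PolyGrowthDerivs 1 1 f)
    (hh : PolyGrowthDerivs 1 1 h) : PolyBoundedBy (ae μ) 1 (carreDuChamp e k f h) :=
  .sum fun α _ => (hf.dirDeriv (e α)).polyBoundedBy.weight_mul <|
    .sum fun β _ => (hk.polyBoundedBy α β).weight_mul (hh.dirDeriv (e β)).polyBoundedBy

lemma polyBoundedBy_weight (hk : IsTameKernel μ e σ k) (hf : PolyBoundedBy (ae μ) 1 f) :
    PolyBoundedBy (ae μ) σ f := by
  refine hf.mono_weight (isBigO_of_le _ fun z => ?_)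
  simpa using (hk.one_le_weight z).trans (le_abs_self _)

lemma polyBoundedBy_diffusionOp (hk : IsTameKernel μ e σ k) (hf : PolyGrowthDerivs 1 2 f) :
    PolyBoundedBy (ae μ) σ (diffusionOp e k f) := by
  have hfirst : PolyBoundedBy (ae μ) σ fun z =>
      ∑ β, (∑ α, dirDeriv (e α) (k α β) z) * dirDeriv (e β) f z := by
    simpa only [mul_comm] using PolyBoundedBy.sum fun β _ =>
      (hf.dirDeriv (e β)).polyBoundedBy.weight_mul (hk.drift_polyBoundedBy β)
  have hsecond : PolyBoundedBy (ae μ) 1 fun z =>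
      ∑ α, ∑ β, k α β z * dirDeriv (e α) (dirDeriv (e β) f) z :=
    .sum fun α _ => .sum fun β _ => (hk.polyBoundedBy α β).weight_mul
      (((hf.mono one_le_two le_rfl).dirDeriv (e β)).dirDeriv (e α)).polyBoundedBy
  refine (hfirst.add (hk.polyBoundedBy_weight hsecond)).congr ?_
  filter_upwards [hk.contDiffAt] with z hz
  exact (diffusionOp_eq_sum_add_sum (fun α β => (hz α β).differentiableAt one_ne_zero)
    hf.contDiff.contDiffAt).symm

lemma polyBoundedBy_diffusionOp_exp (hk : IsTameKernel μ e σ k) (hf : PolyGrowthDerivs 1 2 f) :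
    PolyBoundedBy (ae μ) (fun z => σ z * exp (f z)) (diffusionOp e k fun z => exp (f z)) := by
  have hf₁ := hf.mono le_rfl one_le_two
  have hsum := (hk.polyBoundedBy_diffusionOp hf).add
    (hk.polyBoundedBy_weight (hk.polyBoundedBy_carreDuChamp hf₁ hf₁))
  refine (hsum.mul (.refl _ fun z => exp (f z))).congr ?_
  filter_upwards [hk.contDiffAt] with z hz
  rw [diffusionOp_exp hz hf.contDiff.contDiffAt, mul_comm]

lemma polyBoundedBy_diffusionOp_mul_exp (hk : IsTameKernel μ e σ k)
    (hf : PolyGrowthDerivs 1 2 f) (hψ : PolyGrowthDerivs 0 2 ψ) :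
    PolyBoundedBy (ae μ) (fun z => σ z * exp (f z))
      (diffusionOp e k fun z => ψ z * exp (f z)) := by
  have hexp := PolyBoundedBy.refl (ae μ) fun z => exp (f z)
  have hcarre := hk.polyBoundedBy_weight <| hk.polyBoundedBy_carreDuChamp
    (hf.mono le_rfl one_le_two) (hψ.mono zero_le_one one_le_two)
  have hsum := ((hψ.polyBoundedBy.weight_mul (hk.polyBoundedBy_diffusionOp_exp hf)).add
    ((hk.polyBoundedBy_diffusionOp (hψ.mono zero_le_one le_rfl)).mul hexp)).add
    ((hcarre.mul hexp).const_mul 2)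
  refine hsum.congr ?_
  filter_upwards [hk.contDiffAt] with z hz
  rw [diffusionOp_mul hz (fun α β => hk.symm α β z) hψ.contDiff.contDiffAt
      hf.contDiff.exp.contDiffAt,
    carreDuChamp_comm (f := ψ) (fun α β => hk.symm α β z),
    carreDuChamp_exp_left (hf.contDiff.differentiable two_ne_zero z)]
  ring

section Integral

variable [BorelSpace E] (hk : IsTameKernel μ e σ k)
  (hf : PolyGrowthDerivs 1 2 f) (hψ : PolyGrowthDerivs 0 2 ψ)
  (hweight : ∀ n : ℕ, Integrable (fun z => (1 + ‖z‖) ^ n * (σ z * exp (f z))) μ)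
include hk hf hψ hweight

lemma integrable_mul_diffusionOp :
    Integrable (fun z => ψ z * diffusionOp e k (fun y => ψ y * exp (f y)) z) μ :=
  (hψ.polyBoundedBy.weight_mul (hk.polyBoundedBy_diffusionOp_mul_exp hf hψ)).integrable
    (hψ.contDiff.continuous.measurable.mul (measurable_diffusionOp e k _)).aestronglyMeasurable
    hweight

lemma integrable_sq_mul_diffusionOp :
    Integrable (fun z => ψ z ^ 2 * diffusionOp e k (fun y => exp (f y)) z) μ := by
  simp only [sq, mul_assoc]
  exact (hψ.polyBoundedBy.weight_mul <| hψ.polyBoundedBy.weight_mul <|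
      hk.polyBoundedBy_diffusionOp_exp hf).integrable
    (hψ.contDiff.continuous.measurable.mul <| hψ.contDiff.continuous.measurable.mul <|
      measurable_diffusionOp e k _).aestronglyMeasurable hweight

lemma integrable_mul_carreDuChamp :
    Integrable (fun z => exp (f z) * carreDuChamp e k ψ ψ z) μ := by
  have hψ₁ := hψ.mono zero_le_one one_le_two
  simp only [mul_comm (exp _)]
  exact ((hk.polyBoundedBy_weight (hk.polyBoundedBy_carreDuChamp hψ₁ hψ₁)).mul
      (.refl _ fun z => exp (f z))).integrable
    ((aestronglyMeasurable_carreDuChamp hk.aestronglyMeasurable e ψ ψ).mul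
      hf.contDiff.exp.continuous.measurable.aestronglyMeasurable) hweight

/-- Integrate the product rule for `L (ψ² g)`, where `g = exp f`. -/
theorem integral_mul_diffusionOp_sub
    (hdiv : ∀ φ, ContDiff ℝ 2 φ → Integrable (diffusionOp e k φ) μ →
      ∫ z, diffusionOp e k φ z ∂μ = 0) :
    (∫ z, ψ z * diffusionOp e k (fun y => ψ y * exp (f y)) z ∂μ)
        - 1 / 2 * ∫ z, ψ z ^ 2 * diffusionOp e k (fun y => exp (f y)) z ∂μ
      = -∫ z, exp (f z) * carreDuChamp e k ψ ψ z ∂μ := by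
  have hint₁ := (integrable_mul_diffusionOp hk hf hψ hweight).const_mul 2
  have hint₂ := integrable_sq_mul_diffusionOp hk hf hψ hweight
  have hint₃ := (integrable_mul_carreDuChamp hk hf hψ hweight).const_mul 2
  have hproduct : diffusionOp e k (fun y => ψ y * (ψ y * exp (f y))) =ᵐ[μ] fun z =>
      2 * (ψ z * diffusionOp e k (fun y => ψ y * exp (f y)) z)
        - ψ z ^ 2 * diffusionOp e k (fun y => exp (f y)) z
        + 2 * (exp (f z) * carreDuChamp e k ψ ψ z) := by
    filter_upwards [hk.contDiffAt] with z hz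
    exact diffusionOp_sq_mul hz (fun α β => hk.symm α β z) hψ.contDiff.contDiffAt
      hf.contDiff.exp.contDiffAt
  have hzero := hdiv _ (hψ.contDiff.mul (hψ.contDiff.mul hf.contDiff.exp))
    (((hint₁.sub hint₂).add hint₃).congr hproduct.symm)
  rw [integral_congr_ae hproduct, integral_add ?_ hint₃, integral_sub hint₁ hint₂,
    integral_const_mul, integral_const_mul] at hzero
  · linarith
  · exact hint₁.sub hint₂

end Integral

end IsTameKernel

end TameKernel

section LandauMatrix

variable {a : ℝ → ℝ} {x : V3}

lemma sq3_nonneg (x : V3) : 0 ≤ sq3 x := Finset.sum_nonneg fun _ _ => sq_nonneg _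

lemma sq_apply_le_sq3 (x : V3) (α : Fin 3) : x α ^ 2 ≤ sq3 x :=
  Finset.single_le_sum (f := fun α => x α ^ 2) (fun _ _ => sq_nonneg _) (Finset.mem_univ α)

lemma norm_le_nrm3 (x : V3) : ‖x‖ ≤ nrm3 x :=
  (pi_norm_le_iff_of_nonneg (sqrt_nonneg _)).2 fun α => abs_le_sqrt (sq_apply_le_sq3 x α)

lemma norm_sq_le_sq3 (x : V3) : ‖x‖ ^ 2 ≤ sq3 x :=
  (le_sqrt (norm_nonneg x) (sq3_nonneg x)).1 (norm_le_nrm3 x)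

lemma sq3_pos (hx : x ≠ 0) : 0 < sq3 x :=
  (pow_pos (norm_pos_iff.2 hx) 2).trans_le (norm_sq_le_sq3 x)

lemma nrm3_pos (hx : x ≠ 0) : 0 < nrm3 x := sqrt_pos.2 (sq3_pos hx)

lemma contDiff_sq3 {n : ℕ∞ω} : ContDiff ℝ n sq3 := by
  unfold sq3
  fun_prop

lemma dirDeriv_apply (y : V3) (α : Fin 3) (x : V3) : dirDeriv y (fun x => x α) x = y α := by
  simp [dirDeriv, fderiv_apply]

lemma dirDeriv_sq3 (y x : V3) : dirDeriv y sq3 x = 2 * ∑ α, x α * y α := by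
  have hsq3 : sq3 = fun x => ∑ α, x α * x α := funext fun x => by simp only [sq3, sq]
  rw [hsq3, dirDeriv_sum fun _ _ => by fun_prop, Finset.mul_sum]
  refine Finset.sum_congr rfl fun α _ => ?_
  rw [dirDeriv_mul (by fun_prop) (by fun_prop), dirDeriv_apply]
  ring

lemma contDiffAt_proj {n : ℕ∞ω} (hx : x ≠ 0) (α β : Fin 3) :
    ContDiffAt ℝ n (fun x => proj x α β) x := by
  unfold proj
  exact contDiffAt_const.sub (ContDiffAt.div (by fun_prop) contDiff_sq3.contDiffAt (sq3_pos hx).ne')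

lemma dirDeriv_proj (hx : x ≠ 0) (y : V3) (α β : Fin 3) :
    dirDeriv y (fun x => proj x α β) x = 2 * x α * x β * (∑ γ, x γ * y γ) / sq3 x ^ 2
      - (y α * x β + x α * y β) / sq3 x := by
  have hs := (sq3_pos hx).ne'
  have hsq3 : DifferentiableAt ℝ sq3 x := contDiff_sq3.contDiffAt.differentiableAt one_ne_zero
  have hinv : dirDeriv y (fun x => (sq3 x)⁻¹) x = -(sq3 x ^ 2)⁻¹ * (2 * ∑ γ, x γ * y γ) := by
    rw [dirDeriv_comp (differentiableAt_inv hs) hsq3, dirDeriv_sq3, deriv_inv]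
  have hneg : dirDeriv y (fun x => proj x α β) x
      = -dirDeriv y (fun x => x α * x β * (sq3 x)⁻¹) x := by
    simp [dirDeriv, proj, div_eq_mul_inv, fderiv_const_sub]
  rw [hneg, dirDeriv_mul (by fun_prop) (hsq3.fun_inv hs), hinv,
    dirDeriv_mul (by fun_prop) (by fun_prop), dirDeriv_apply, dirDeriv_apply]
  ring

lemma sum_mul_proj (hx : x ≠ 0) (β : Fin 3) : ∑ α, x α * proj x α β = 0 := by
  have hs := (sq3_pos hx).ne'
  simp only [proj, mul_sub, mul_ite, mul_one, mul_zero, Finset.sum_sub_distrib, Finset.sum_ite_eq',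
    Finset.mem_univ, if_true]
  have hsum : ∑ α, x α * (x α * x β / sq3 x) = sq3 x * x β / sq3 x := by
    rw [sq3, Finset.sum_mul, Finset.sum_div]
    exact Finset.sum_congr rfl fun α _ => by ring
  rw [hsum]
  field_simp
  ring

lemma sum_dirDeriv_proj (hx : x ≠ 0) (β : Fin 3) :
    ∑ α, dirDeriv (Pi.single α 1) (fun x => proj x α β) x = -2 * x β / sq3 x := by
  have hs := (sq3_pos hx).ne'
  have hterm : ∀ α, dirDeriv (Pi.single α 1) (fun x => proj x α β) x
      = 2 * x β / sq3 x ^ 2 * x α ^ 2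
        - (x β + x α * (Pi.single α 1 : V3) β) / sq3 x := by
    intro α
    have hsum : ∑ γ, x γ * (Pi.single α 1 : V3) γ = x α := by simp [Pi.single_apply]
    rw [dirDeriv_proj hx, hsum, Pi.single_eq_same]
    ring
  have hsingle : ∑ α, x α * (Pi.single α 1 : V3) β = x β := by simp [Pi.single_apply]
  simp only [hterm, Finset.sum_sub_distrib, ← Finset.mul_sum, ← Finset.sum_div,
    Finset.sum_add_distrib, hsingle, Finset.sum_const, Finset.card_univ, Fintype.card_fin]
  rw [show ∑ α, x α ^ 2 = sq3 x from rfl]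
  field_simp
  ring

/-- `Π` is symmetric and idempotent. -/
lemma sum_sum_proj_mul_sq (hx : x ≠ 0) (y : V3) :
    ∑ α, (∑ β, proj x α β * y β) ^ 2 = ∑ α, y α * ∑ β, proj x α β * y β := by
  have hP : ∀ α, ∑ β, proj x α β * y β = y α - x α * ((∑ β, x β * y β) / sq3 x) := by
    intro α
    simp only [proj, sub_mul, ite_mul, one_mul, zero_mul, Finset.sum_sub_distrib,
      Finset.sum_ite_eq, Finset.mem_univ, if_true, Finset.mul_sum, Finset.sum_div]
    exact congrArg _ (Finset.sum_congr rfl fun β _ => by ring)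
  have horth : ∑ α, x α * ∑ β, proj x α β * y β = 0 := by
    simp only [Finset.mul_sum, ← mul_assoc]
    rw [Finset.sum_comm]
    simp only [← Finset.sum_mul, sum_mul_proj hx, zero_mul, Finset.sum_const_zero]
  calc ∑ α, (∑ β, proj x α β * y β) ^ 2
      = ∑ α, y α * ∑ β, proj x α β * y β
        - (∑ β, x β * y β) / sq3 x * ∑ α, x α * ∑ β, proj x α β * y β := by
        rw [Finset.mul_sum, ← Finset.sum_sub_distrib]
        exact Finset.sum_congr rfl fun α _ => by rw [hP]; ring
    _ = _ := by rw [horth, mul_zero, sub_zero]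

lemma abs_proj_le (x : V3) (α β : Fin 3) : |proj x α β| ≤ 2 := by
  have hcs : |x α * x β / sq3 x| ≤ 1 := by
    rw [abs_div, abs_of_nonneg (sq3_nonneg x), abs_mul]
    refine div_le_one_of_le₀ ?_ (sq3_nonneg x)
    nlinarith [sq_apply_le_sq3 x α, sq_apply_le_sq3 x β, sq_abs (x α), sq_abs (x β),
      sq_nonneg (|x α| - |x β|)]
  have hdelta : |(if α = β then (1 : ℝ) else 0)| ≤ 1 := by split_ifs <;> simp
  exact (abs_sub _ _).trans (by linarith)

lemma contDiffAt_nrm3 {n : ℕ∞ω} (hx : x ≠ 0) : ContDiffAt ℝ n nrm3 x :=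
  contDiff_sq3.contDiffAt.sqrt (sq3_pos hx).ne'

lemma dirDeriv_nrm3 (hx : x ≠ 0) (y : V3) :
    dirDeriv y nrm3 x = (∑ α, x α * y α) / nrm3 x := by
  have hs := (sq3_pos hx).ne'
  calc dirDeriv y nrm3 x = deriv sqrt (sq3 x) * dirDeriv y sq3 x :=
        dirDeriv_comp (hasDerivAt_sqrt hs).differentiableAt
          (contDiff_sq3.contDiffAt.differentiableAt one_ne_zero) y
    _ = _ := by
        rw [(hasDerivAt_sqrt hs).deriv, dirDeriv_sq3, ← nrm3]
        have := (nrm3_pos hx).ne'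
        field_simp

/-- The Landau matrix `a(|x|) Π(x)`. -/
def landauMatrix (a : ℝ → ℝ) (α β : Fin 3) (x : V3) : ℝ := a (nrm3 x) * proj x α β

lemma landauMatrix_symm (α β : Fin 3) (x : V3) : landauMatrix a α β x = landauMatrix a β α x := by
  simp only [landauMatrix, proj, eq_comm (a := α), mul_comm (x α)]

lemma contDiffAt_landauMatrix {n : ℕ∞ω} (ha : ContDiffOn ℝ n a (Set.Ioi 0)) (hx : x ≠ 0)
    (α β : Fin 3) : ContDiffAt ℝ n (landauMatrix a α β) x :=
  ((ha.contDiffAt (Ioi_mem_nhds (nrm3_pos hx))).comp x (contDiffAt_nrm3 hx)).mul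
    (contDiffAt_proj hx α β)

/-- The gradient of `a(|x|)` is parallel to `x`, so `Π` annihilates it. -/
lemma sum_dirDeriv_landauMatrix (ha : DifferentiableOn ℝ a (Set.Ioi 0)) (hx : x ≠ 0)
    (β : Fin 3) :
    ∑ α, dirDeriv (Pi.single α 1) (landauMatrix a α β) x = -2 * a (nrm3 x) * x β / sq3 x := by
  have hnrm3 : DifferentiableAt ℝ nrm3 x := (contDiffAt_nrm3 hx).differentiableAt one_ne_zero
  have ha' := ha.differentiableAt (Ioi_mem_nhds (nrm3_pos hx))
  have hcomp : DifferentiableAt ℝ (fun x => a (nrm3 x)) x := ha'.comp x hnrm3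
  have hterm : ∀ α, dirDeriv (Pi.single α 1) (landauMatrix a α β) x
      = deriv a (nrm3 x) / nrm3 x * (x α * proj x α β)
        + a (nrm3 x) * dirDeriv (Pi.single α 1) (fun x => proj x α β) x := by
    intro α
    have hsum : ∑ γ, x γ * (Pi.single α 1 : V3) γ = x α := by simp [Pi.single_apply]
    unfold landauMatrix
    rw [dirDeriv_mul hcomp ((contDiffAt_proj hx α β).differentiableAt one_ne_zero),
      dirDeriv_comp ha' hnrm3, dirDeriv_nrm3 hx, hsum]
    ring
  simp only [hterm, Finset.sum_add_distrib, ← Finset.mul_sum, sum_mul_proj hx,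
    sum_dirDeriv_proj hx]
  ring

lemma abs_landauMatrix_le {C : ℝ} (hC : ∀ r, 0 < r → |a r| ≤ C) (hx : x ≠ 0) (α β : Fin 3) :
    |landauMatrix a α β x| ≤ C * 2 := by
  have hle := hC _ (nrm3_pos hx)
  rw [landauMatrix, abs_mul]
  exact mul_le_mul hle (abs_proj_le x α β) (abs_nonneg _) ((abs_nonneg _).trans hle)

lemma abs_sum_dirDeriv_landauMatrix_le {C : ℝ} (ha : DifferentiableOn ℝ a (Set.Ioi 0))
    (hC : ∀ r, 0 < r → |a r| ≤ C) (hx : x ≠ 0) (β : Fin 3) :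
    |∑ α, dirDeriv (Pi.single α 1) (landauMatrix a α β) x| ≤ 2 * C * ‖x‖⁻¹ := by
  have hle := hC _ (nrm3_pos hx)
  have hnorm : 0 < ‖x‖ := norm_pos_iff.2 hx
  have hratio : |x β| / sq3 x ≤ ‖x‖⁻¹ :=
    calc |x β| / sq3 x ≤ ‖x‖ / ‖x‖ ^ 2 :=
          div_le_div₀ hnorm.le (norm_le_pi_norm x β) (by positivity) (norm_sq_le_sq3 x)
      _ = ‖x‖⁻¹ := by field_simp
  calc |∑ α, dirDeriv (Pi.single α 1) (landauMatrix a α β) x|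
      = 2 * |a (nrm3 x)| * (|x β| / sq3 x) := by
        rw [sum_dirDeriv_landauMatrix ha hx, mul_div_assoc, abs_mul, abs_mul, abs_div,
          abs_of_pos (sq3_pos hx), abs_neg, abs_two]
    _ ≤ 2 * C * ‖x‖⁻¹ :=
        mul_le_mul (by linarith) hratio (div_nonneg (abs_nonneg _) (sq3_nonneg x))
          (by linarith [abs_nonneg (a (nrm3 x))])

end LandauMatrix

section RelativeVelocity

instance : (volume : Measure E9).IsAddHaarMeasure :=
  haveI : (volume : Measure (V3 × V3)).IsAddHaarMeasure :=
    Measure.prod.instIsAddHaarMeasure volume volume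
  Measure.prod.instIsAddHaarMeasure volume volume

/-- The relative velocity `u - v` of a point `(u, v, w)`. -/
def relVel : E9 →L[ℝ] V3 :=
  ContinuousLinearMap.fst ℝ V3 (V3 × V3)
    - (ContinuousLinearMap.fst ℝ V3 V3).comp (ContinuousLinearMap.snd ℝ V3 (V3 × V3))

/-- The direction of the derivative `∂_{u_α} - ∂_{v_α}`. -/
def relDir (α : Fin 3) : E9 := (Pi.single α 1, -Pi.single α 1, 0)

/-- The direction of the derivative `∂_{w_γ}`. -/
def wDir (γ : Fin 3) : E9 := (0, 0, Pi.single γ 1)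

lemma relVel_apply (z : E9) : relVel z = z.1 - z.2.1 := rfl

lemma relVel_relDir (α : Fin 3) : relVel (relDir α) = (2 : ℝ) • Pi.single α 1 := by
  rw [relVel_apply, relDir, sub_neg_eq_add, two_smul]

lemma relVel_wDir (γ : Fin 3) : relVel (wDir γ) = 0 := by simp [relVel_apply, wDir]

lemma pdu_sub_pdvv (f : E9 → ℝ) (z : E9) (α : Fin 3) :
    pdu f z α - pdvv f z α = dirDeriv (relDir α) f z := by
  simp [pdu, pdvv, dirDeriv, relDir, ← map_sub]

lemma pdw_eq_dirDeriv (f : E9 → ℝ) (z : E9) (γ : Fin 3) : pdw f z γ = dirDeriv (wDir γ) f z := rfl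

lemma isOpen_relVel_ne_zero : IsOpen {z : E9 | relVel z ≠ 0} :=
  isOpen_ne.preimage relVel.continuous

lemma ae_relVel_ne_zero : ∀ᵐ z : E9, relVel z ≠ 0 := by
  have hker : LinearMap.ker (relVel : E9 →ₗ[ℝ] V3) ≠ ⊤ := fun htop => by
    have hmem : relDir 0 ∈ LinearMap.ker (relVel : E9 →ₗ[ℝ] V3) := htop ▸ Submodule.mem_top
    simp [relVel_relDir] at hmem
  simpa [ae_iff] using! Measure.addHaar_submodule volume _ hker

lemma aestronglyMeasurable_of_continuousAt {f : E9 → ℝ}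
    (hf : ∀ z, relVel z ≠ 0 → ContinuousAt f z) : AEStronglyMeasurable f volume := by
  rw [← Measure.restrict_eq_self_of_ae_mem (s := {z : E9 | relVel z ≠ 0}) ae_relVel_ne_zero]
  exact ContinuousOn.aestronglyMeasurable (fun z hz => (hf z hz).continuousWithinAt)
    isOpen_relVel_ne_zero.measurableSet

end RelativeVelocity

section LandauKernel

variable {a : ℝ → ℝ} {C : ℝ} {z : E9}

/-- The coefficient matrix `a(|u - v|) Π(u - v)` of the operator `Dop9 a`. -/
def landauKernel (a : ℝ → ℝ) (α β : Fin 3) (z : E9) : ℝ := landauMatrix a α β (relVel z)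

lemma flux9_eq_diffusionFlux (a : ℝ → ℝ) (f : E9 → ℝ) (α : Fin 3) :
    flux9 a f α = diffusionFlux relDir (landauKernel a) f α := by
  funext z
  simp only [flux9, pdu_sub_pdvv, diffusionFlux, landauKernel, landauMatrix, relVel_apply,
    Finset.mul_sum, mul_assoc]

lemma Dop9_eq_diffusionOp (a : ℝ → ℝ) (f : E9 → ℝ) :
    Dop9 a f = diffusionOp relDir (landauKernel a) f := by
  funext z
  simp only [Dop9, pdu_sub_pdvv, flux9_eq_diffusionFlux, diffusionOp]

lemma carreDuChamp_landauKernel (hz : relVel z ≠ 0) (f : E9 → ℝ) :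
    carreDuChamp relDir (landauKernel a) f f z
      = a (nrm3 (relVel z)) *
        ∑ α, (∑ β, proj (relVel z) α β * dirDeriv (relDir β) f z) ^ 2 := by
  simp only [sum_sum_proj_mul_sq hz, carreDuChamp, diffusionFlux, landauKernel, landauMatrix,
    Finset.mul_sum]
  exact Finset.sum_congr rfl fun α _ => Finset.sum_congr rfl fun β _ => by ring

lemma contDiffAt_landauKernel {n : ℕ∞ω} (ha : ContDiffOn ℝ n a (Set.Ioi 0)) (hz : relVel z ≠ 0)
    (α β : Fin 3) : ContDiffAt ℝ n (landauKernel a α β) z :=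
  (contDiffAt_landauMatrix ha hz α β).comp z relVel.contDiff.contDiffAt

lemma dirDeriv_wDir_landauKernel (ha : ContDiffOn ℝ 1 a (Set.Ioi 0)) (hz : relVel z ≠ 0)
    (γ α β : Fin 3) : dirDeriv (wDir γ) (landauKernel a α β) z = 0 := by
  unfold landauKernel
  rw [dirDeriv_comp_clm relVel
    ((contDiffAt_landauMatrix ha hz α β).differentiableAt one_ne_zero), relVel_wDir, dirDeriv,
    map_zero]

lemma pdw_Dop9 {f : E9 → ℝ} (ha : ContDiffOn ℝ 2 a (Set.Ioi 0)) (hf : ContDiff ℝ 3 f)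
    (hz : relVel z ≠ 0) (γ : Fin 3) :
    pdw (Dop9 a f) z γ
      = diffusionOp relDir (landauKernel a) (dirDeriv (wDir γ) f) z := by
  rw [pdw_eq_dirDeriv, Dop9_eq_diffusionOp]
  refine dirDeriv_diffusionOp (contDiffAt_landauKernel ha hz) (fun α β => ?_) hf.contDiffAt
  filter_upwards [isOpen_relVel_ne_zero.mem_nhds hz] with y hy
  exact dirDeriv_wDir_landauKernel (ha.of_le one_le_two) hy γ α β

lemma abs_sum_dirDeriv_landauKernel_le (ha : ContDiffOn ℝ 1 a (Set.Ioi 0))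
    (hC : ∀ r, 0 < r → |a r| ≤ C) (hz : relVel z ≠ 0) (β : Fin 3) :
    |∑ α, dirDeriv (relDir α) (landauKernel a α β) z| ≤ 4 * C * ‖relVel z‖⁻¹ := by
  have hchain : ∑ α, dirDeriv (relDir α) (landauKernel a α β) z
      = 2 * ∑ α, dirDeriv (Pi.single α 1) (landauMatrix a α β) (relVel z) := by
    rw [Finset.mul_sum]
    refine Finset.sum_congr rfl fun α _ => ?_
    unfold landauKernel
    rw [dirDeriv_comp_clm relVel
      ((contDiffAt_landauMatrix ha hz α β).differentiableAt one_ne_zero), relVel_relDir,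
      dirDeriv_smul]
  rw [hchain, abs_mul, abs_two]
  linarith [abs_sum_dirDeriv_landauMatrix_le (ha.differentiableOn one_ne_zero) hC hz β]

lemma isTameKernel_landauKernel (ha : ContDiffOn ℝ 1 a (Set.Ioi 0))
    (hC : ∀ r, 0 < r → |a r| ≤ C) :
    IsTameKernel volume relDir (fun z => 1 + ‖relVel z‖⁻¹) (landauKernel a) where
  one_le_weight z := le_add_of_nonneg_right (inv_nonneg.2 (norm_nonneg _))
  symm α β z := landauMatrix_symm α β (relVel z)
  contDiffAt := ae_relVel_ne_zero.mono fun z hz => contDiffAt_landauKernel ha hz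
  aestronglyMeasurable α β := aestronglyMeasurable_of_continuousAt fun z hz =>
    (contDiffAt_landauKernel ha hz α β).continuousAt
  polyBoundedBy α β := by
    refine ⟨0, IsBigO.of_bound (C * 2) (ae_relVel_ne_zero.mono fun z hz => ?_)⟩
    simpa [landauKernel] using abs_landauMatrix_le hC hz α β
  drift_polyBoundedBy β := by
    refine ⟨0, IsBigO.of_bound (4 * C) (ae_relVel_ne_zero.mono fun z hz => ?_)⟩
    have hC₀ : 0 ≤ C := (abs_nonneg _).trans (hC 1 one_pos)
    have hnorm := inv_nonneg.2 (norm_nonneg (relVel z))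
    rw [pow_zero, one_mul, norm_of_nonneg (by linarith : 0 ≤ 1 + ‖relVel z‖⁻¹)]
    exact (abs_sum_dirDeriv_landauKernel_le ha hC hz β).trans
      (mul_le_mul_of_nonneg_left (by linarith) (by linarith))

end LandauKernel

section Cutoff

variable {a : ℝ → ℝ} {z : E9}

/-- The squared Euclidean norm on `ℝ⁹`. -/
def sq9 (z : E9) : ℝ := sq3 z.1 + sq3 z.2.1 + sq3 z.2.2

lemma norm_sq_le_sq9 (z : E9) : ‖z‖ ^ 2 ≤ sq9 z := by
  have hu := sq3_nonneg z.1
  have hv := sq3_nonneg z.2.1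
  have hw := sq3_nonneg z.2.2
  have hle : ∀ x : V3, sq3 x ≤ sq9 z → ‖x‖ ≤ √(sq9 z) := fun x hx =>
    le_sqrt_of_sq_le ((norm_sq_le_sq3 x).trans hx)
  rw [← le_sqrt (norm_nonneg z) (by unfold sq9; positivity), norm_prod_le_iff, norm_prod_le_iff]
  exact ⟨hle _ (by rw [sq9]; linarith), hle _ (by rw [sq9]; linarith),
    hle _ (by rw [sq9]; linarith)⟩

lemma contDiff_sq3_relVel {n : ℕ∞ω} : ContDiff ℝ n fun z => sq3 (relVel z) :=
  contDiff_sq3.comp relVel.contDiff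

lemma contDiff_sq9 {n : ℕ∞ω} : ContDiff ℝ n sq9 :=
  ((contDiff_sq3.comp contDiff_fst).add (contDiff_sq3.comp contDiff_snd.fst)).add
    (contDiff_sq3.comp contDiff_snd.snd)

lemma dirDeriv_relDir_sq3_relVel (α : Fin 3) (z : E9) :
    dirDeriv (relDir α) (fun z => sq3 (relVel z)) z = 4 * relVel z α := by
  rw [dirDeriv_comp_clm relVel (contDiff_sq3.differentiable one_ne_zero _), relVel_relDir,
    dirDeriv_smul, dirDeriv_sq3]
  simp [Pi.single_apply]
  ring

lemma dirDeriv_relDir_sq9 (α : Fin 3) (z : E9) :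
    dirDeriv (relDir α) sq9 z = 2 * relVel z α := by
  have hsq3 : Differentiable ℝ sq3 := contDiff_sq3.differentiable one_ne_zero
  have hblock : ∀ A : E9 →L[ℝ] V3, dirDeriv (relDir α) (fun z => sq3 (A z)) z
      = 2 * ∑ β, A z β * A (relDir α) β := fun A => by
    rw [dirDeriv_comp_clm A (hsq3 _), dirDeriv_sq3]
  have hu : dirDeriv (relDir α) (fun z => sq3 z.1) z = 2 * z.1 α := by
    simpa [relDir, Pi.single_apply] using hblock (.fst ℝ V3 (V3 × V3))
  have hv : dirDeriv (relDir α) (fun z => sq3 z.2.1) z = -(2 * z.2.1 α) := by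
    simpa [relDir, Pi.single_apply] using
      hblock ((ContinuousLinearMap.fst ℝ V3 V3).comp (.snd ℝ V3 (V3 × V3)))
  have hw : dirDeriv (relDir α) (fun z => sq3 z.2.2) z = 0 := by
    simpa [relDir] using hblock ((ContinuousLinearMap.snd ℝ V3 V3).comp (.snd ℝ V3 (V3 × V3)))
  unfold sq9
  rw [dirDeriv_add (by fun_prop) (by fun_prop), dirDeriv_add (by fun_prop) (by fun_prop), hu, hv,
    hw, relVel_apply, Pi.sub_apply]
  ring

/-- A cutoff away from the collision set `u = v` and from infinity, exhausting the rest of `ℝ⁹`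
as `n` grows. It depends only on `|u - v|²` and `|u|² + |v|² + |w|²`. -/
def collisionCutoff (n : ℕ) (z : E9) : ℝ :=
  smoothTransition ((n + 1) * sq3 (relVel z) - 1) * smoothTransition (2 - sq9 z / (n + 1))

lemma contDiff_collisionCutoff {m : ℕ∞} (n : ℕ) : ContDiff ℝ m (collisionCutoff n) :=
  (smoothTransition.contDiff.comp ((contDiff_const.mul contDiff_sq3_relVel).sub
    contDiff_const)).mul
    (smoothTransition.contDiff.comp (contDiff_const.sub (contDiff_sq9.div_const _)))

lemma abs_collisionCutoff_le_one (n : ℕ) (z : E9) : |collisionCutoff n z| ≤ 1 := by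
  rw [collisionCutoff, abs_mul, abs_of_nonneg (smoothTransition.nonneg _),
    abs_of_nonneg (smoothTransition.nonneg _)]
  exact mul_le_one₀ (smoothTransition.le_one _) (smoothTransition.nonneg _)
    (smoothTransition.le_one _)

lemma hasCompactSupport_collisionCutoff (n : ℕ) : HasCompactSupport (collisionCutoff n) := by
  refine .intro (isCompact_closedBall 0 (2 * (n + 1))) fun z hz => ?_
  have hlt : 2 * ((n : ℝ) + 1) < ‖z‖ := by simpa using hz
  have hle : 2 ≤ sq9 z / (n + 1) := by
    rw [le_div_iff₀ (by positivity)]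
    nlinarith [norm_sq_le_sq9 z, (Nat.cast_nonneg n : (0 : ℝ) ≤ n)]
  rw [collisionCutoff, smoothTransition.zero_of_nonpos (by linarith : 2 - _ ≤ (0 : ℝ)), mul_zero]

lemma eventually_collisionCutoff_eq_zero (n : ℕ) (hz : relVel z = 0) :
    collisionCutoff n =ᶠ[𝓝 z] 0 := by
  have hcont : Continuous fun y => (n + 1) * sq3 (relVel y) :=
    (contDiff_const.mul (contDiff_sq3_relVel (n := 0))).continuous
  have hzero : (n + 1) * sq3 (relVel z) < 1 := by simp [hz, sq3]
  filter_upwards [hcont.continuousAt.eventually_lt_const hzero] with y hy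
  rw [collisionCutoff, smoothTransition.zero_of_nonpos (by linarith), zero_mul, Pi.zero_apply]

lemma tendsto_collisionCutoff (hz : relVel z ≠ 0) :
    Tendsto (fun n => collisionCutoff n z) atTop (𝓝 1) := by
  have hcast : Tendsto (fun n : ℕ => (n : ℝ) + 1) atTop atTop :=
    tendsto_natCast_atTop_atTop.atTop_add tendsto_const_nhds
  refine tendsto_const_nhds.congr' ?_
  filter_upwards [hcast.eventually_ge_atTop (2 / sq3 (relVel z)),
    hcast.eventually_ge_atTop (sq9 z)] with n hinner houter
  have hinner' := (div_le_iff₀ (sq3_pos hz)).1 hinner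
  have houter' : sq9 z / (n + 1) ≤ 1 := div_le_one_of_le₀ houter (by positivity)
  rw [collisionCutoff, smoothTransition.one_of_one_le (by linarith),
    smoothTransition.one_of_one_le (by linarith), mul_one]

lemma exists_dirDeriv_relDir_collisionCutoff (n : ℕ) (z : E9) :
    ∃ c, ∀ α, dirDeriv (relDir α) (collisionCutoff n) z = c * relVel z α := by
  have htrans : Differentiable ℝ smoothTransition :=
    smoothTransition.contDiff.differentiable (n := 1) one_ne_zero
  let b₁ : ℝ → ℝ := fun s => smoothTransition ((n + 1) * s - 1)
  let b₂ : ℝ → ℝ := fun s => smoothTransition (2 - s / (n + 1))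
  have hb₁ : Differentiable ℝ b₁ := htrans.comp (by fun_prop)
  have hb₂ : Differentiable ℝ b₂ := htrans.comp (by fun_prop)
  have hs : Differentiable ℝ fun z => sq3 (relVel z) :=
    contDiff_sq3_relVel.differentiable one_ne_zero
  have hq : Differentiable ℝ sq9 := contDiff_sq9.differentiable one_ne_zero
  refine ⟨deriv b₁ (sq3 (relVel z)) * 4 * b₂ (sq9 z)
    + b₁ (sq3 (relVel z)) * (deriv b₂ (sq9 z) * 2), fun α => ?_⟩
  calc dirDeriv (relDir α) (collisionCutoff n) z
      = dirDeriv (relDir α) (fun z => b₁ (sq3 (relVel z))) z * b₂ (sq9 z)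
        + b₁ (sq3 (relVel z)) * dirDeriv (relDir α) (fun z => b₂ (sq9 z)) z :=
        dirDeriv_mul (hb₁.comp hs z) (hb₂.comp hq z) _
    _ = _ := by
        rw [dirDeriv_comp (hb₁ _) (hs z), dirDeriv_comp (hb₂ _) (hq z),
          dirDeriv_relDir_sq3_relVel, dirDeriv_relDir_sq9]
        ring

lemma carreDuChamp_landauKernel_eq_zero {f h : E9 → ℝ} (hz : relVel z ≠ 0) {c : ℝ}
    (hf : ∀ α, dirDeriv (relDir α) f z = c * relVel z α) :
    carreDuChamp relDir (landauKernel a) f h z = 0 := by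
  have hflux : ∀ β, diffusionFlux relDir (landauKernel a) f β z
      = c * a (nrm3 (relVel z)) * ∑ α, relVel z α * proj (relVel z) α β := by
    intro β
    rw [diffusionFlux, Finset.mul_sum]
    refine Finset.sum_congr rfl fun α _ => ?_
    rw [hf, landauKernel, landauMatrix_symm, landauMatrix]
    ring
  have hsymm : ∀ α β, landauKernel a α β z = landauKernel a β α z := fun α β =>
    landauMatrix_symm α β (relVel z)
  rw [carreDuChamp_comm hsymm, carreDuChamp]
  simp only [hflux, sum_mul_proj hz, mul_zero, Finset.sum_const_zero]

theorem integral_diffusionOp_landauKernel_eq_zero (ha : ContDiffOn ℝ 1 a (Set.Ioi 0)) {f : E9 → ℝ}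
    (hf : ContDiff ℝ 2 f) (hint : Integrable (diffusionOp relDir (landauKernel a) f)) :
    ∫ z, diffusionOp relDir (landauKernel a) f z = 0 := by
  refine integral_divergence_eq_zero (χ := collisionCutoff) (fun n α => ?_)
    hasCompactSupport_collisionCutoff (fun n => ae_relVel_ne_zero.mono fun z hz => ?_)
    abs_collisionCutoff_le_one (ae_relVel_ne_zero.mono fun z hz => tendsto_collisionCutoff hz) hint
  · refine contDiff_iff_contDiffAt.2 fun z => ?_
    by_cases hz : relVel z = 0
    · refine contDiffAt_const (c := 0) |>.congr_of_eventuallyEq ?_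
      filter_upwards [eventually_collisionCutoff_eq_zero n hz] with y hy
      rw [hy, Pi.zero_apply, zero_mul]
    · exact (contDiff_collisionCutoff n).contDiffAt.mul (contDiffAt_diffusionFlux
        (contDiffAt_landauKernel ha hz) hf.contDiffAt one_add_one_eq_two.le α)
  · obtain ⟨c, hc⟩ := exists_dirDeriv_relDir_collisionCutoff n z
    rw [sum_dirDeriv_mul_diffusionFlux (contDiffAt_landauKernel ha hz)
      ((contDiff_collisionCutoff (m := 1) n).differentiable one_ne_zero z) hf.contDiffAt,
      carreDuChamp_landauKernel_eq_zero hz hc, add_zero, diffusionOp]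

end Cutoff

section GaussianWeight

variable {b : ℝ}

lemma integrable_norm_rpow_mul_exp_neg_mul_norm_sq {E : Type*} [NormedAddCommGroup E]
    [NormedSpace ℝ E] [FiniteDimensional ℝ E] [Nontrivial E] [MeasurableSpace E] [BorelSpace E]
    (μ : Measure E) [μ.IsAddHaarMeasure] (hb : 0 < b) {s : ℝ}
    (hs : -Module.finrank ℝ E < s) :
    Integrable (fun x => ‖x‖ ^ s * exp (-b * ‖x‖ ^ 2)) μ := by
  have hd : 1 ≤ Module.finrank ℝ E := Module.finrank_pos
  rw [integrable_fun_norm_addHaar μ (f := fun r => r ^ s * exp (-b * r ^ 2))]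
  refine (integrableOn_rpow_mul_exp_neg_mul_sq hb
    (s := (Module.finrank ℝ E - 1 : ℕ) + s) ?_).congr_fun (fun r hr => ?_) measurableSet_Ioi
  · push_cast [hd]
    linarith
  · simp only [rpow_add hr, rpow_natCast, smul_eq_mul, mul_assoc]

lemma integrable_singular_mul_gaussian (hb : 0 < b) :
    Integrable fun z : E9 => (1 + ‖relVel z‖⁻¹) *
      exp (-b * (‖relVel z‖ ^ 2 + ‖z.2.1‖ ^ 2 + ‖z.2.2‖ ^ 2)) := by
  have hgauss : Integrable fun x : V3 => exp (-b * ‖x‖ ^ 2) := by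
    simpa using integrable_norm_rpow_mul_exp_neg_mul_norm_sq (volume : Measure V3) hb (s := 0)
      (by simp)
  have hinv : Integrable fun x : V3 => ‖x‖⁻¹ * exp (-b * ‖x‖ ^ 2) := by
    simpa only [rpow_neg_one] using integrable_norm_rpow_mul_exp_neg_mul_norm_sq
      (volume : Measure V3) hb (s := -1) (by simp)
  have hsub : MeasurePreserving (fun p : (V3 × V3) × V3 => ((p.1.1 - p.1.2, p.1.2), p.2)) :=
    (measurePreserving_sub_prod (volume : Measure V3) (volume : Measure V3)).prod
      (MeasurePreserving.id (volume : Measure V3))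
  have hint := volume_preserving_prodAssoc.symm.integrable_comp_of_integrable <|
    hsub.integrable_comp_of_integrable <| ((hgauss.add hinv).mul_prod hgauss).mul_prod hgauss
  refine hint.congr (Eventually.of_forall fun z => ?_)
  simp only [Function.comp_apply, Pi.add_apply, mul_add, Real.exp_add, relVel_apply]
  simp [MeasurableEquiv.prodAssoc]
  ring

lemma integrable_singular_mul_exp_neg_sq9 (hb : 0 < b) :
    Integrable fun z : E9 => (1 + ‖relVel z‖⁻¹) * exp (-b * sq9 z) := by
  refine (integrable_singular_mul_gaussian (b := b / 4) (by positivity)).mono'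
    (aestronglyMeasurable_of_continuousAt fun z hz => ?_) (Eventually.of_forall fun z => ?_)
  · have hinv : ContinuousAt (fun z => ‖relVel z‖⁻¹) z :=
      relVel.continuous.norm.continuousAt.inv₀ (norm_ne_zero_iff.2 hz)
    have hsq9 : Continuous sq9 := (contDiff_sq9 (n := 0)).continuous
    exact (continuousAt_const.add hinv).mul (by fun_prop)
  · have hrel : ‖relVel z‖ ^ 2 ≤ 2 * (‖z.1‖ ^ 2 + ‖z.2.1‖ ^ 2) :=
      (pow_le_pow_left₀ (norm_nonneg _) (norm_sub_le z.1 z.2.1) 2).trans (add_sq_le ..)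
    have hsum : (‖relVel z‖ ^ 2 + ‖z.2.1‖ ^ 2 + ‖z.2.2‖ ^ 2) / 4 ≤ sq9 z := by
      rw [sq9]
      linarith [norm_sq_le_sq3 z.1, norm_sq_le_sq3 z.2.1, norm_sq_le_sq3 z.2.2,
        sq_nonneg ‖z.1‖, sq_nonneg ‖z.2.1‖, sq_nonneg ‖z.2.2‖]
    rw [norm_of_nonneg (by positivity)]
    gcongr _ * exp ?_
    nlinarith

lemma exists_one_add_pow_mul_exp_le (hb : 0 < b) (n : ℕ) :
    ∃ C, ∀ t : ℝ, 0 ≤ t → (1 + t) ^ n * exp (-b * t ^ 2) ≤ C := by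
  refine ⟨n.factorial * exp (1 + 1 / (4 * b)), fun t ht => ?_⟩
  have hpow := pow_div_factorial_le_exp (1 + t) (by linarith) n
  rw [div_le_iff₀ (by positivity)] at hpow
  have hsquare : 1 + t + -b * t ^ 2 ≤ 1 + 1 / (4 * b) := by
    have : 1 / (4 * b) - (t + -b * t ^ 2) = b * (t - 1 / (2 * b)) ^ 2 := by
      field_simp
      ring
    linarith [mul_nonneg hb.le (sq_nonneg (t - 1 / (2 * b)))]
  calc (1 + t) ^ n * exp (-b * t ^ 2)
      ≤ exp (1 + t) * n.factorial * exp (-b * t ^ 2) := by gcongr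
    _ = n.factorial * exp (1 + t + -b * t ^ 2) := by rw [Real.exp_add (1 + t)]; ring
    _ ≤ n.factorial * exp (1 + 1 / (4 * b)) := by gcongr

lemma integrable_pow_mul_singular_mul {g : E9 → ℝ} (hg : Continuous g) (hb : 0 < b) {C : ℝ}
    (hle : ∀ z, |g z| ≤ C * exp (-b * sq9 z)) (n : ℕ) :
    Integrable fun z => (1 + ‖z‖) ^ n * ((1 + ‖relVel z‖⁻¹) * g z) := by
  obtain ⟨K, hK⟩ := exists_one_add_pow_mul_exp_le (half_pos hb) n
  have hC : 0 ≤ C := nonneg_of_mul_nonneg_left ((abs_nonneg _).trans (hle 0)) (exp_pos _)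
  have hpoly : ∀ z : E9, (1 + ‖z‖) ^ n * exp (-(b / 2) * sq9 z) ≤ K := fun z =>
    (mul_le_mul_of_nonneg_left (exp_le_exp.2 (by nlinarith [norm_sq_le_sq9 z]))
      (by positivity)).trans (hK ‖z‖ (norm_nonneg z))
  refine ((integrable_singular_mul_exp_neg_sq9 (half_pos hb)).const_mul (C * K)).mono'
    (aestronglyMeasurable_of_continuousAt fun z hz => ?_) (Eventually.of_forall fun z => ?_)
  · have hinv : ContinuousAt (fun z => ‖relVel z‖⁻¹) z :=
      relVel.continuous.norm.continuousAt.inv₀ (norm_ne_zero_iff.2 hz)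
    exact ContinuousAt.mul (by fun_prop) ((continuousAt_const.add hinv).mul hg.continuousAt)
  · have hσ : 0 ≤ 1 + ‖relVel z‖⁻¹ := by positivity
    rw [norm_mul, norm_mul, norm_of_nonneg hσ, norm_of_nonneg (by positivity), norm_eq_abs]
    calc (1 + ‖z‖) ^ n * ((1 + ‖relVel z‖⁻¹) * |g z|)
        ≤ (1 + ‖z‖) ^ n * ((1 + ‖relVel z‖⁻¹) *
            (C * (exp (-(b / 2) * sq9 z) * exp (-(b / 2) * sq9 z)))) := by
          gcongr
          exact (hle z).trans_eq (by rw [← Real.exp_add]; ring_nf)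
      _ = C * ((1 + ‖z‖) ^ n * exp (-(b / 2) * sq9 z)) *
            ((1 + ‖relVel z‖⁻¹) * exp (-(b / 2) * sq9 z)) := by ring
      _ ≤ C * K * ((1 + ‖relVel z‖⁻¹) * exp (-(b / 2) * sq9 z)) := by
          gcongr
          exact hpoly z

end GaussianWeight

section ThirdVariable

variable {a : ℝ → ℝ} {C : ℝ} {g : E9 → ℝ} {z : E9}

/-- The `γ`-th component of the logarithmic gradient `ξ = ∇_w g / g`. -/
def wScore (g : E9 → ℝ) (γ : Fin 3) (z : E9) : ℝ := pdw g z γ / g z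

/-- The `(α, γ)` entry of the matrix `ΠM - (Πη) ⊗ ξ` at the point `z`. -/
def thirdVariableMatrix (g : E9 → ℝ) (z : E9) (α γ : Fin 3) : ℝ :=
  (∑ β, proj (z.1 - z.2.1) α β *
      (pdu (fun y => pdw g y γ) z β - pdvv (fun y => pdw g y γ) z β))
    - (∑ β, proj (z.1 - z.2.1) α β * (pdu g z β - pdvv g z β)) * (pdw g z γ / g z)

lemma wScore_mul (hpos : ∀ z, 0 < g z) (γ : Fin 3) :
    (fun z => wScore g γ z * g z) = dirDeriv (wDir γ) g :=
  funext fun z => div_mul_cancel₀ _ (hpos z).ne'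

lemma dirDeriv_log_eq_wScore (hg : Differentiable ℝ g) (hpos : ∀ z, 0 < g z) (γ : Fin 3) :
    dirDeriv (wDir γ) (fun z => log (g z)) = wScore g γ :=
  funext fun z => dirDeriv_log (hg z) (hpos z).ne' _

lemma mul_dirDeriv_wScore (hg : ContDiff ℝ 2 g) (hpos : ∀ z, 0 < g z) (γ : Fin 3) (x : E9) :
    g z * dirDeriv x (wScore g γ) z
      = dirDeriv x (dirDeriv (wDir γ) g) z - dirDeriv x g z * wScore g γ z := by
  have hg' : DifferentiableAt ℝ g z := hg.contDiffAt.differentiableAt two_ne_zero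
  have hscore : DifferentiableAt ℝ (wScore g γ) z := by
    rw [← dirDeriv_log_eq_wScore (hg.differentiable two_ne_zero) hpos]
    exact differentiableAt_dirDeriv (hg.contDiffAt.log (hpos z).ne') _
  rw [← wScore_mul hpos, dirDeriv_mul hscore hg']
  ring

lemma mul_carreDuChamp_wScore (hg : ContDiff ℝ 2 g) (hpos : ∀ z, 0 < g z) (hz : relVel z ≠ 0)
    (γ : Fin 3) :
    g z * carreDuChamp relDir (landauKernel a) (wScore g γ) (wScore g γ) z
      = a (nrm3 (z.1 - z.2.1)) / g z * ∑ α, thirdVariableMatrix g z α γ ^ 2 := by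
  have hentry : ∀ α, thirdVariableMatrix g z α γ
      = g z * ∑ β, proj (relVel z) α β * dirDeriv (relDir β) (wScore g γ) z := by
    intro α
    simp only [thirdVariableMatrix, pdu_sub_pdvv, Finset.mul_sum, Finset.sum_mul,
      mul_left_comm (g z), mul_dirDeriv_wScore hg hpos, mul_sub, Finset.sum_sub_distrib, mul_assoc]
    rfl
  have hgz := (hpos z).ne'
  simp only [carreDuChamp_landauKernel hz, hentry, mul_pow, ← Finset.mul_sum, relVel_apply]
  field_simp

section Identity

variable (ha : ContDiffOn ℝ 2 a (Set.Ioi 0)) (hC : ∀ r, 0 < r → |a r| ≤ C)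
  (hpos : ∀ z, 0 < g z) (hlog : PolyGrowthDerivs 1 3 fun z => log (g z))
  (hint : ∀ n : ℕ, Integrable fun z => (1 + ‖z‖) ^ n * ((1 + ‖relVel z‖⁻¹) * g z))
include hpos hlog

lemma contDiff_of_polyGrowthDerivs_log : ContDiff ℝ 3 g := by
  have hexp := hlog.contDiff.exp
  simp only [exp_log (hpos _)] at hexp
  exact hexp

lemma polyGrowthDerivs_wScore (γ : Fin 3) : PolyGrowthDerivs 0 2 (wScore g γ) := by
  rw [← dirDeriv_log_eq_wScore
    ((contDiff_of_polyGrowthDerivs_log hpos hlog).differentiable three_ne_zero) hpos]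
  exact hlog.dirDeriv (wDir γ)

include ha in
lemma wScore_mul_pdw_Dop9 (γ : Fin 3) :
    (fun z => wScore g γ z * pdw (Dop9 a g) z γ) =ᵐ[volume] fun z => wScore g γ z *
      diffusionOp relDir (landauKernel a) (fun y => wScore g γ y * g y) z := by
  filter_upwards [ae_relVel_ne_zero] with z hz
  rw [pdw_Dop9 ha (contDiff_of_polyGrowthDerivs_log hpos hlog) hz, wScore_mul hpos]

include ha hC hint

lemma integrable_wScore_mul_pdw_Dop9 (γ : Fin 3) :
    Integrable fun z => wScore g γ z * pdw (Dop9 a g) z γ := by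
  have h := (isTameKernel_landauKernel (ha.of_le one_le_two) hC).integrable_mul_diffusionOp
    (hlog.mono le_rfl (by norm_num)) (polyGrowthDerivs_wScore hpos hlog γ)
    (by simpa only [exp_log (hpos _)] using hint)
  simp only [exp_log (hpos _)] at h
  exact h.congr (wScore_mul_pdw_Dop9 ha hpos hlog γ).symm

lemma integrable_wScore_sq_mul_Dop9 (γ : Fin 3) :
    Integrable fun z => wScore g γ z ^ 2 * Dop9 a g z := by
  have h := (isTameKernel_landauKernel (ha.of_le one_le_two) hC).integrable_sq_mul_diffusionOp
    (hlog.mono le_rfl (by norm_num)) (polyGrowthDerivs_wScore hpos hlog γ)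
    (by simpa only [exp_log (hpos _)] using hint)
  simpa only [exp_log (hpos _), Dop9_eq_diffusionOp] using h

lemma integrable_mul_sum_thirdVariableMatrix_sq (γ : Fin 3) :
    Integrable fun z : E9 =>
      a (nrm3 (z.1 - z.2.1)) / g z * ∑ α, thirdVariableMatrix g z α γ ^ 2 := by
  have h := (isTameKernel_landauKernel (ha.of_le one_le_two) hC).integrable_mul_carreDuChamp
    (hlog.mono le_rfl (by norm_num)) (polyGrowthDerivs_wScore hpos hlog γ)
    (by simpa only [exp_log (hpos _)] using hint)
  simp only [exp_log (hpos _)] at h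
  refine h.congr (ae_relVel_ne_zero.mono fun z hz => ?_)
  exact mul_carreDuChamp_wScore
    ((contDiff_of_polyGrowthDerivs_log hpos hlog).of_le (by norm_num)) hpos hz γ

lemma integral_wScore_mul_pdw_Dop9_sub (γ : Fin 3) :
    (∫ z, wScore g γ z * pdw (Dop9 a g) z γ) - 1 / 2 * ∫ z, wScore g γ z ^ 2 * Dop9 a g z
      = -∫ z : E9, a (nrm3 (z.1 - z.2.1)) / g z * ∑ α, thirdVariableMatrix g z α γ ^ 2 := by
  have ha₁ := ha.of_le one_le_two
  have h := (isTameKernel_landauKernel ha₁ hC).integral_mul_diffusionOp_sub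
    (hlog.mono le_rfl (by norm_num)) (polyGrowthDerivs_wScore hpos hlog γ)
    (by simpa only [exp_log (hpos _)] using hint)
    (fun _ => integral_diffusionOp_landauKernel_eq_zero ha₁)
  simp only [exp_log (hpos _), ← Dop9_eq_diffusionOp] at h
  rw [integral_congr_ae (wScore_mul_pdw_Dop9 ha hpos hlog γ), ← Dop9_eq_diffusionOp, h]
  refine congrArg Neg.neg (integral_congr_ae (ae_relVel_ne_zero.mono fun z hz => ?_))
  exact mul_carreDuChamp_wScore
    ((contDiff_of_polyGrowthDerivs_log hpos hlog).of_le (by norm_num)) hpos hz γ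

theorem third_variable_term_identity :
    (∫ z, ∑ γ, wScore g γ z * pdw (Dop9 a g) z γ)
        - 1 / 2 * ∫ z, (∑ γ, wScore g γ z ^ 2) * Dop9 a g z
      = -∫ z : E9, a (nrm3 (z.1 - z.2.1)) / g z * ∑ α, ∑ γ, thirdVariableMatrix g z α γ ^ 2 := by
  have hswap : ∀ z : E9, a (nrm3 (z.1 - z.2.1)) / g z * ∑ α, ∑ γ, thirdVariableMatrix g z α γ ^ 2
      = ∑ γ, a (nrm3 (z.1 - z.2.1)) / g z * ∑ α, thirdVariableMatrix g z α γ ^ 2 := fun z => by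
    rw [Finset.sum_comm, Finset.mul_sum]
  simp only [hswap, Finset.sum_mul]
  rw [integral_finsetSum _ fun γ _ => integrable_wScore_mul_pdw_Dop9 ha hC hpos hlog hint γ,
    integral_finsetSum _ fun γ _ => integrable_wScore_sq_mul_Dop9 ha hC hpos hlog hint γ,
    integral_finsetSum _ fun γ _ =>
      integrable_mul_sum_thirdVariableMatrix_sq ha hC hpos hlog hint γ,
    Finset.mul_sum, ← Finset.sum_sub_distrib, ← Finset.sum_neg_distrib]
  exact Finset.sum_congr rfl fun γ _ =>
    integral_wScore_mul_pdw_Dop9_sub ha hC hpos hlog hint γ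

end Identity

lemma integral_mul_sum_sum_thirdVariableMatrix_sq_nonneg (ha : ∀ r, 0 < r → 0 ≤ a r)
    (hpos : ∀ z, 0 < g z) :
    0 ≤ ∫ z : E9, a (nrm3 (z.1 - z.2.1)) / g z * ∑ α, ∑ γ, thirdVariableMatrix g z α γ ^ 2 := by
  refine integral_nonneg_of_ae (ae_relVel_ne_zero.mono fun z hz => ?_)
  have hnonneg := ha _ (nrm3_pos hz)
  have := hpos z
  exact mul_nonneg (div_nonneg hnonneg this.le) (by positivity)

end ThirdVariable

theorem third_variable_term_fisher_decay_general
    (a : ℝ → ℝ) (ha : ContDiffOn ℝ 2 a (Set.Ioi 0)) (ha_nonneg : ∀ r : ℝ, 0 < r → 0 ≤ a r)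
    {C : ℝ} (ha_bdd : ∀ r : ℝ, 0 < r → |a r| ≤ C)
    (g : E9 → ℝ) (hpos : ∀ z, 0 < g z) (hlog : PolyGrowthDerivs 1 3 fun z => log (g z))
    (hint : ∀ n : ℕ, Integrable fun z => (1 + ‖z‖) ^ n * ((1 + ‖relVel z‖⁻¹) * g z)) :
    (∫ z : E9, ∑ γ, (pdw g z γ / g z) * pdw (Dop9 a g) z γ)
      - (1 / 2) * (∫ z : E9, ((∑ γ, (pdw g z γ) ^ 2) / (g z) ^ 2) * Dop9 a g z)
      = -(∫ z : E9, (a (nrm3 (z.1 - z.2.1)) / g z) *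
          ∑ α, ∑ γ,
            ((∑ β, proj (z.1 - z.2.1) α β *
                (pdu (fun y => pdw g y γ) z β - pdvv (fun y => pdw g y γ) z β))
              - (∑ β, proj (z.1 - z.2.1) α β * (pdu g z β - pdvv g z β))
                  * (pdw g z γ / g z)) ^ 2) ∧
    (∫ z : E9, ∑ γ, (pdw g z γ / g z) * pdw (Dop9 a g) z γ)
      - (1 / 2) * (∫ z : E9, ((∑ γ, (pdw g z γ) ^ 2) / (g z) ^ 2) * Dop9 a g z) ≤ 0 := by
  have hscore : ∀ z, (∑ γ, pdw g z γ ^ 2) / g z ^ 2 = ∑ γ, wScore g γ z ^ 2 := fun z => by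
    simp only [wScore, div_pow, Finset.sum_div]
  simp only [hscore]
  have hidentity := third_variable_term_identity ha ha_bdd hpos hlog hint
  exact ⟨hidentity, hidentity.trans_le <| neg_nonpos.2 <|
    integral_mul_sum_sum_thirdVariableMatrix_sq_nonneg ha_nonneg hpos⟩

/-- The third-variable term `Term_{k≠i≠j}` in the proof of Fisher decay along the
Landau–Kac flow: with `M_{αγ} = (∂_{u_α}−∂_{v_α})∂_{w_γ} g`, `η = ∇_u g − ∇_v g`,
`ξ = ∇_w g / g`, one has
`∫ (∇_w g/g)·∇_w D − (1/2)∫ (|∇_w g|²/g²) D = −∫ (a/g)‖ΠM − (Πη)⊗ξ‖_F² ≤ 0`. -/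
theorem third_variable_term_fisher_decay
    (a : ℝ → ℝ)
    (ha_smooth : ContDiffOn ℝ (⊤ : ℕ∞) a (Set.Ioi 0))
    (ha_nonneg : ∀ r : ℝ, 0 < r → 0 ≤ a r)
    (ha_bdd : ∃ C : ℝ, ∀ r : ℝ, 0 < r → |a r| ≤ C ∧ |deriv a r| ≤ C)
    (g : E9 → ℝ)
    (hsmooth : ContDiff ℝ (⊤ : ℕ∞) g) (hpos : ∀ z, 0 < g z)
    (hGauss : ∃ c C β β' : ℝ, 0 < c ∧ c ≤ C ∧ 0 < β ∧ 0 < β' ∧ ∀ z : E9,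
        c * Real.exp (-β * (sq3 z.1 + sq3 z.2.1 + sq3 z.2.2)) ≤ g z ∧
        g z ≤ C * Real.exp (-β' * (sq3 z.1 + sq3 z.2.1 + sq3 z.2.2)))
    (hPoly : ∀ k : ℕ, k ≤ 4 → ∃ C : ℝ, ∃ n : ℕ, ∀ z : E9,
        ‖iteratedFDeriv ℝ k (fun w => Real.log (g w)) z‖ ≤ C * (1 + ‖z‖) ^ n) :
    (∫ z : E9, ∑ γ, (pdw g z γ / g z) * pdw (Dop9 a g) z γ)
      - (1 / 2) * (∫ z : E9, ((∑ γ, (pdw g z γ) ^ 2) / (g z) ^ 2) * Dop9 a g z)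
      = -(∫ z : E9, (a (nrm3 (z.1 - z.2.1)) / g z) *
          ∑ α, ∑ γ,
            ((∑ β, proj (z.1 - z.2.1) α β *
                (pdu (fun y => pdw g y γ) z β - pdvv (fun y => pdw g y γ) z β))
              - (∑ β, proj (z.1 - z.2.1) α β * (pdu g z β - pdvv g z β))
                  * (pdw g z γ / g z)) ^ 2) ∧
    (∫ z : E9, ∑ γ, (pdw g z γ / g z) * pdw (Dop9 a g) z γ)
      - (1 / 2) * (∫ z : E9, ((∑ γ, (pdw g z γ) ^ 2) / (g z) ^ 2) * Dop9 a g z) ≤ 0 := by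
  obtain ⟨_, K, _, b, -, -, -, hb, hg⟩ := hGauss
  obtain ⟨C, hC⟩ := ha_bdd
  have hlog : PolyGrowthDerivs 1 3 fun z => log (g z) :=
    ⟨contDiff_infty.1 (hsmooth.log fun z => (hpos z).ne') 3,
      fun k _ hk => hPoly k (by lia)⟩
  have hle : ∀ z, |g z| ≤ K * exp (-b * sq9 z) := fun z =>
    (abs_of_pos (hpos z)).trans_le (hg z).2
  exact third_variable_term_fisher_decay_general a (contDiffOn_infty.1 ha_smooth 2)
    ha_nonneg (fun r hr => (hC r hr).1) g hpos hlog
    (integrable_pow_mul_singular_mul hsmooth.continuous hb hle)
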